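/- Let φ: (R,m,k) → (S,n,ℓ) be a flat local ring homomorphism between commutative Noetherian local rings which is essentially of finite type and complete intersection at n, and let M be a finitely generated S-module. If CI-fd_R M < ∞, then CI-dim_S M < ∞. -/

import Mathlib

/-!
Common definitions: André–Quillen homology via the standard (comonad/polynomial)
simplicial resolution, complete-intersection (flat) dimensions via quasi-deformations,
Cohen factorizations, Koszul homology `H₁`, and related notions.
-/

universe u

open TensorProduct IsLocalRing

noncomputable section

/-! ### Flat and projective dimension -/

/-- `FlatDimLE Q n N` : the `Q`-module `N` has flat dimension at most `n`,
i.e. it admits a flat resolution of length at most `n`. -/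
def FlatDimLE (Q : Type u) [CommRing Q] : ℕ → (N : Type u) → [AddCommGroup N] → [Module Q N] → Prop
  | 0, N, _, _ => Module.Flat Q N
  | n+1, N, _, _ =>
      ∃ (F : Type u) (_ : AddCommGroup F) (_ : Module Q F) (f : F →ₗ[Q] N),
        Module.Flat Q F ∧ Function.Surjective f ∧ FlatDimLE Q n (LinearMap.ker f)

/-- `ProjDimLE Q n N` : the `Q`-module `N` has projective dimension at most `n`. -/
def ProjDimLE (Q : Type u) [CommRing Q] : ℕ → (N : Type u) → [AddCommGroup N] → [Module Q N] → Prop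
  | 0, N, _, _ => Module.Projective Q N
  | n+1, N, _, _ =>
      ∃ (F : Type u) (_ : AddCommGroup F) (_ : Module Q F) (f : F →ₗ[Q] N),
        Module.Projective Q F ∧ Function.Surjective f ∧ ProjDimLE Q n (LinearMap.ker f)

/-- The flat dimension `fd_Q N` is finite. -/
def FlatDimFinite (Q : Type u) [CommRing Q] (N : Type u) [AddCommGroup N] [Module Q N] : Prop :=
  ∃ n : ℕ, FlatDimLE Q n N

/-- The projective dimension `pd_Q N` is finite. -/
def ProjDimFinite (Q : Type u) [CommRing Q] (N : Type u) [AddCommGroup N] [Module Q N] : Prop :=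
  ∃ n : ℕ, ProjDimLE Q n N

/-! ### Regular sequences, regular local rings, complete intersection conditions -/

/-- The ideal `I` is generated by an `A`-regular sequence. -/
def GeneratedByRegularSequence (A : Type u) [CommRing A] (I : Ideal A) : Prop :=
  ∃ rs : List A, RingTheory.Sequence.IsRegular A rs ∧ Ideal.span {x | x ∈ rs} = I

/-- A (Noetherian local) ring is regular iff its maximal ideal is generated by a
regular sequence. -/
def IsRegularLocal (A : Type u) [CommRing A] : Prop :=
  IsNoetherianRing A ∧
    ∃ h : IsLocalRing A, GeneratedByRegularSequence A (@IsLocalRing.maximalIdeal A _ h)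

/-- A local homomorphism is weakly regular if it is flat with regular closed fibre. -/
def IsWeaklyRegularHom (A B : Type u) [CommRing A] [CommRing B] [IsLocalRing A]
    (f : A →+* B) : Prop :=
  IsLocalHom f ∧ (letI := f.toAlgebra; Module.Flat A B) ∧
    IsRegularLocal (B ⧸ Ideal.map f (maximalIdeal A))

/-- `R'' → f → g` is a Cohen factorization of the semi-completion of `ψ : A → B`
with respect to the (maximal) ideal `J` of `B`:  `A → R'' → B̂` with `A → R''`
weakly regular, `R''` complete Noetherian local and `R'' → B̂` surjective local. -/
def IsCohenFactorizationAt (A B : Type u) [CommRing A] [CommRing B] [IsLocalRing A]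
    (ψ : A →+* B) (J : Ideal B) (R'' : Type u) [CommRing R'']
    (f : A →+* R'') (g : R'' →+* AdicCompletion J B) : Prop :=
  g.comp f = (algebraMap B (AdicCompletion J B)).comp ψ ∧
  IsNoetherianRing R'' ∧
  (∃ h : IsLocalRing R'', IsAdicComplete (@IsLocalRing.maximalIdeal R'' _ h) R'') ∧
  IsWeaklyRegularHom A R'' f ∧
  Function.Surjective g ∧ IsLocalHom g

/-- `ψ : A → B` is complete intersection (c.i.) at the ideal `J` (typically the
maximal ideal of `B`): in a Cohen factorization `A → R'' → B̂` of the
semi-completion of `ψ`, the kernel of `R'' → B̂` is generated by a regular sequence. -/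
def IsCIAt (A B : Type u) [CommRing A] [CommRing B] [IsLocalRing A]
    (ψ : A →+* B) (J : Ideal B) : Prop :=
  ∃ (R'' : Type u) (_ : CommRing R'') (f : A →+* R'') (g : R'' →+* AdicCompletion J B),
    IsCohenFactorizationAt A B ψ J R'' f g ∧ GeneratedByRegularSequence R'' (RingHom.ker g)

/-- A Noetherian local ring is a complete intersection if its completion is the
quotient of a complete regular local ring by an ideal generated by a regular sequence. -/
def IsCompleteIntersectionRing (A : Type u) [CommRing A] : Prop :=
  IsNoetherianRing A ∧
  ∃ h : IsLocalRing A,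
    ∃ (Q : Type u) (_ : CommRing Q)
      (g : Q →+* AdicCompletion (@IsLocalRing.maximalIdeal A _ h) A),
      IsRegularLocal Q ∧ (∃ hq : IsLocalRing Q, IsAdicComplete (@IsLocalRing.maximalIdeal Q _ hq) Q) ∧
      Function.Surjective g ∧ GeneratedByRegularSequence Q (RingHom.ker g)

/-! ### Complete intersection (flat) dimensions via quasi-deformations

`R → R' ← Q` is a quasi-deformation when `R → R'` is flat local and `Q → R'` is
surjective local with kernel generated by a `Q`-regular sequence (all rings
Noetherian local).  The various complete intersection (flat) dimensions
`CI-fd`, `CI-dim`, `CI*-fd`, `CI*-dim`, `cidim-fd`, `cidim` of a module `M` are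
`inf { fd_Q(R' ⊗_R M) - pd_Q R' }` over (upper / complete intersection)
quasi-deformations; such a dimension is finite iff there is a quasi-deformation
of the appropriate kind for which both `fd_Q (R' ⊗_R M)` and `pd_Q R'` are finite. -/

/-- The conditions on `R → R' ← Q` making it a quasi-deformation. -/
def IsQuasiDeformation (R R' Q : Type u) [CommRing R] [CommRing R'] [CommRing Q]
    (f : R →+* R') (g : Q →+* R') : Prop :=
  IsLocalRing R' ∧ IsLocalRing Q ∧ IsNoetherianRing R' ∧ IsNoetherianRing Q ∧
  IsLocalHom f ∧ IsLocalHom g ∧ (letI := f.toAlgebra; Module.Flat R R') ∧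
  Function.Surjective g ∧ GeneratedByRegularSequence Q (RingHom.ker g)

/-- `CI-fd_R M < ∞` (equivalently, for finitely generated `M`, `CI-dim_R M < ∞`):
there is a quasi-deformation `R → R' ← Q` with `fd_Q (R' ⊗_R M)` and `pd_Q R'` finite. -/
def HasFiniteCIDim (R : Type u) [CommRing R] (M : Type u) [AddCommGroup M] [Module R M] : Prop :=
  ∃ (R' Q : Type u) (_ : CommRing R') (_ : CommRing Q) (f : R →+* R') (g : Q →+* R'),
    IsQuasiDeformation R R' Q f g ∧
    (letI := f.toAlgebra;
     letI := g.toAlgebra;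
     letI : Module Q (R' ⊗[R] M) := Module.compHom _ g;
     FlatDimFinite Q (R' ⊗[R] M) ∧ ProjDimFinite Q R')

/-- `CI*-fd_R M < ∞` (resp. `CI*-dim_R M < ∞`): as in `HasFiniteCIDim` but over
upper quasi-deformations, i.e. `R → R'` is weakly regular. -/
def HasFiniteUpperCIDim (R : Type u) [CommRing R] [IsLocalRing R]
    (M : Type u) [AddCommGroup M] [Module R M] : Prop :=
  ∃ (R' Q : Type u) (_ : CommRing R') (_ : CommRing Q) (f : R →+* R') (g : Q →+* R'),
    IsQuasiDeformation R R' Q f g ∧ IsWeaklyRegularHom R R' f ∧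
    (letI := f.toAlgebra;
     letI := g.toAlgebra;
     letI : Module Q (R' ⊗[R] M) := Module.compHom _ g;
     FlatDimFinite Q (R' ⊗[R] M) ∧ ProjDimFinite Q R')

/-- `cidim-fd_R M < ∞` (resp. `cidim_R M < ∞`): as in `HasFiniteCIDim` but over
complete intersection quasi-deformations, i.e. `R → R'` is c.i. at the maximal
ideal of `R'`. -/
def HasFiniteCIQDDim (R : Type u) [CommRing R] [IsLocalRing R]
    (M : Type u) [AddCommGroup M] [Module R M] : Prop :=
  ∃ (R' Q : Type u) (_ : CommRing R') (_ : CommRing Q) (hR' : IsLocalRing R')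
    (f : R →+* R') (g : Q →+* R'),
    IsQuasiDeformation R R' Q f g ∧
    IsCIAt R R' f (@IsLocalRing.maximalIdeal R' _ hR') ∧
    (letI := f.toAlgebra;
     letI := g.toAlgebra;
     letI : Module Q (R' ⊗[R] M) := Module.compHom _ g;
     FlatDimFinite Q (R' ⊗[R] M) ∧ ProjDimFinite Q R')

/-! ### André–Quillen homology

`D_n(S|R, M)` is defined as the `n`-th homology of `L ⊗_S M`, where `L` is the
cotangent complex of the `R`-algebra `S`: the complex associated to the standard
simplicial resolution `X` of `S` by polynomial `R`-algebras (the comonad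
resolution `X_n = G^{n+1} S`, `G A = R[A]`), with `L_n = S ⊗_{X_n} Ω_{X_n/R}`
the free `S`-module on the variables of `X_n` and differentials the alternating
sums of the maps induced by the face maps. -/

/-- `AQV R S n` is, for `n ≥ 1`, the `n`-th ring in the standard simplicial
polynomial resolution of `S` over `R` (and `AQV R S 0 = S` as an index set). -/
def AQV (R S : Type u) [CommRing R] : ℕ → Type u
  | 0 => S
  | n+1 => MvPolynomial (AQV R S n) R

noncomputable instance (R S : Type u) [CommRing R] (n : ℕ) : CommRing (AQV R S (n+1)) :=
  inferInstanceAs (CommRing (MvPolynomial (AQV R S n) R))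

noncomputable instance (R S : Type u) [CommRing R] (n : ℕ) : Algebra R (AQV R S (n+1)) :=
  inferInstanceAs (Algebra R (MvPolynomial (AQV R S n) R))

/-- The augmentations `X_n → S` of the standard resolution. -/
def AQaug (R S : Type u) [CommRing R] [CommRing S] [Algebra R S] :
    (n : ℕ) → (AQV R S (n+1) →ₐ[R] S)
  | 0 => MvPolynomial.aeval (id : S → S)
  | n+1 => MvPolynomial.aeval (fun v : AQV R S (n+1) => AQaug R S n v)

/-- The face maps `dᵢ : X_{n+1} → X_n` of the standard resolution: `d₀` is the
counit and `d_{i+1} = G(dᵢ)`. -/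
def AQface (R S : Type u) [CommRing R] [CommRing S] [Algebra R S] :
    (n : ℕ) → (i : ℕ) → (AQV R S (n+2) →ₐ[R] AQV R S (n+1))
  | n, 0 => MvPolynomial.aeval (id : AQV R S (n+1) → AQV R S (n+1))
  | 0, _+1 => MvPolynomial.rename ⇑(AQaug R S 0)
  | n+1, i+1 => MvPolynomial.rename ⇑(AQface R S n i)

variable (R S : Type u) [CommRing R] [CommRing S] [Algebra R S]
variable (M : Type u) [AddCommGroup M] [Module S M]

/-- The map `L_{n+1} ⊗ M → L_n ⊗ M` induced by an `R`-algebra map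
`f : X_{n+1} → X_n` on the (base-changed) Kähler differentials: the free module
on the variables `v` of `X_{n+1}` maps by `e_v ↦ ∑_w aug(∂(f Xᵥ)/∂w) • e_w`. -/
def AQind (n : ℕ) (f : AQV R S (n+2) →ₐ[R] AQV R S (n+1)) :
    (AQV R S (n+1) →₀ M) →ₗ[S] (AQV R S n →₀ M) :=
  Finsupp.lsum S fun v : AQV R S (n+1) =>
    letI : DecidableEq (AQV R S n) := Classical.decEq _
    let P : MvPolynomial (AQV R S n) R := f (MvPolynomial.X v)
    ∑ w ∈ P.vars,
      (Finsupp.lsingle w).comp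
        ((AQaug R S n ((MvPolynomial.pderiv w) P) : S) • (LinearMap.id : M →ₗ[S] M))

/-- The differential `L_{n+1} ⊗ M → L_n ⊗ M` of the cotangent complex:
the alternating sum of the maps induced by the face maps. -/
def AQdiff (n : ℕ) : (AQV R S (n+1) →₀ M) →ₗ[S] (AQV R S n →₀ M) :=
  ∑ i ∈ Finset.range (n+2), ((-1 : ℤ)^i) • AQind R S M n (AQface R S n i)

/-- Cycles of the cotangent complex with coefficients in `M`. -/
def AQcycles : (n : ℕ) → Submodule S (AQV R S n →₀ M)
  | 0 => ⊤
  | n+1 => LinearMap.ker (AQdiff R S M n)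

/-- André–Quillen homology `D_n(S|R, M)`. -/
def AQH (n : ℕ) : Type u :=
  AQcycles R S M n ⧸
    (LinearMap.range (AQdiff R S M n)).comap (AQcycles R S M n).subtype

noncomputable instance (n : ℕ) : AddCommGroup (AQH R S M n) :=
  inferInstanceAs (AddCommGroup (AQcycles R S M n ⧸
    (LinearMap.range (AQdiff R S M n)).comap (AQcycles R S M n).subtype))

/-- `AQdimLE R S d`: the André–Quillen dimension of the `R`-algebra `S` is at
most `d`, i.e. `D_n(S|R, -) = 0` for all `n > d`. -/
def AQdimLE (d : ℕ) : Prop :=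
  ∀ n : ℕ, d < n → ∀ (N : Type u) (iN : AddCommGroup N) (mN : Module S N),
    Subsingleton (@AQH R S _ _ _ N iN mN n)

/-- `AQ-dim_R S < ∞`. -/
def AQdimFinite : Prop := ∃ d : ℕ, AQdimLE R S d

/-! ### Koszul homology `H₁` -/

/-- First differential of the Koszul complex on `x : Fin c → A`. -/
def koszulD1 (A : Type u) [CommRing A] {c : ℕ} (x : Fin c → A) : (Fin c → A) →ₗ[A] A :=
  ∑ i, x i • (LinearMap.proj i : ((Fin c → A)) →ₗ[A] A)

/-- One-cycles of the Koszul complex on `x`. -/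
def koszulZ1 (A : Type u) [CommRing A] {c : ℕ} (x : Fin c → A) : Submodule A (Fin c → A) :=
  LinearMap.ker (koszulD1 A x)

/-- One-boundaries of the Koszul complex on `x` (the image of the second Koszul
differential, spanned by the elements `xᵢ eⱼ - xⱼ eᵢ`). -/
def koszulB1 (A : Type u) [CommRing A] {c : ℕ} (x : Fin c → A) : Submodule A (Fin c → A) :=
  Submodule.span A
    {v : Fin c → A | ∃ i j, v =
      x i • (Pi.single j (1 : A) : Fin c → A) - x j • (Pi.single i (1 : A) : Fin c → A)}

/-- First Koszul homology of the sequence `x : Fin c → A`. -/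
def KoszulH1 (A : Type u) [CommRing A] {c : ℕ} (x : Fin c → A) : Type u :=
  koszulZ1 A x ⧸ (koszulB1 A x).comap (koszulZ1 A x).subtype

noncomputable instance (A : Type u) [CommRing A] {c : ℕ} (x : Fin c → A) :
    AddCommGroup (KoszulH1 A x) :=
  inferInstanceAs (AddCommGroup (koszulZ1 A x ⧸ (koszulB1 A x).comap (koszulZ1 A x).subtype))

noncomputable instance (A : Type u) [CommRing A] {c : ℕ} (x : Fin c → A) :
    Module A (KoszulH1 A x) :=
  inferInstanceAs (Module A (koszulZ1 A x ⧸ (koszulB1 A x).comap (koszulZ1 A x).subtype))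

/-- `H₁(K(σ))` is a free `T̂`-module:  for any Cohen factorization
`S → S'' → T̂` of the semi-completion of `σ` and any finite generating set `x` of
`ker (S'' → T̂)`, the first Koszul homology of `x`, base-changed to `T̂`
(it is killed by `ker (S'' → T̂)`), is a free `T̂`-module. -/
def KoszulH1FreeHom (S T : Type u) [CommRing S] [CommRing T] [IsLocalRing S] [IsLocalRing T]
    (σ : S →+* T) : Prop :=
  ∀ (S'' : Type u) (_ : CommRing S'') (f : S →+* S'')
    (g : S'' →+* AdicCompletion (maximalIdeal T) T),
    IsCohenFactorizationAt S T σ (maximalIdeal T) S'' f g →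
    ∀ (c : ℕ) (x : Fin c → S''), Ideal.span (Set.range x) = RingHom.ker g →
      (letI := g.toAlgebra;
       Module.Free (AdicCompletion (maximalIdeal T) T)
         ((AdicCompletion (maximalIdeal T) T) ⊗[S''] (KoszulH1 S'' x)))

/-! ### Separability (MacLane) -/

/-- A field extension `ℓ/k` is separable (in the sense of MacLane, allowing
non-algebraic extensions) iff `K ⊗_k ℓ` is reduced for every field extension `K/k`. -/
def IsSeparableFieldExtension (k ℓ : Type u) [Field k] [Field ℓ] [Algebra k ℓ] : Prop :=
  ∀ (K : Type u) (_ : Field K) (_ : Algebra k K), IsReduced (K ⊗[k] ℓ)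

end


variable (R S M : Type u) [CommRing R] [CommRing S]
  [IsLocalRing R] [IsLocalRing S] [IsNoetherianRing R] [IsNoetherianRing S]
  [Algebra R S] [IsLocalHom (algebraMap R S)]
  [AddCommGroup M] [Module R M] [Module S M] [IsScalarTower R S M] [Module.Finite S M]

/-!
Let `R → T → Ŝ` be a Cohen factorization whose second map has a kernel generated by a regular
sequence. Choose variables hitting algebra generators of `S` and, with value `0` in `S`, that
regular sequence; sending them to lifts in `T` gives compatible maps from a localized polynomial
ring `A = R[x₁, …, xₙ]_p` onto `S` and to `T`, and `Â → T` is then surjective. Both rings are weakly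
regular over `R`, so `ker (Â → T)` is generated by a regular sequence: on the closed fibres this is
the case of a surjection of regular local rings, and flatness over `R` lifts it. Hence
`ker (Â → Ŝ)` is generated by a regular sequence, and by faithful flatness so is `ker (A → S)`.

A quasi-deformation for `R` induces one for `A`, by adjoining the variables and localizing at a
prime over `p`, and flat dimension stays finite by Hilbert's syzygy theorem. A quasi-deformation
for `A` becomes one for `S` after base change along `A → S`, because the regular sequence in `A`
lifts to the deforming ring and extends the one already there.
-/

namespace CIDimension

open RingTheory.Sequence

section RegularSequence

variable {A : Type*} [CommRing A]

lemma ofList_eq_of_perm {l l' : List A} (h : l.Perm l') : Ideal.ofList l = Ideal.ofList l' :=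
  congrArg Ideal.span (Set.ext fun _ => h.mem_iff)

lemma ofList_cons_mul_add_of_isUnit {a f s : A} {l : List A} (ha : IsUnit a)
    (hs : s ∈ Ideal.ofList l) : Ideal.ofList ((a * f + s) :: l) = Ideal.ofList (f :: l) := by
  simp only [Ideal.ofList_cons]
  refine le_antisymm (sup_le ?_ le_sup_right) (sup_le ?_ le_sup_right) <;>
    rw [Ideal.span_singleton_le_iff_mem]
  · exact add_mem (Ideal.mem_sup_left (Ideal.mul_mem_left _ a (Ideal.mem_span_singleton_self f)))
      (Ideal.mem_sup_right hs)
  · obtain ⟨b, hb⟩ := ha.exists_left_inv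
    have hf : b * (a * f + s) - b * s = f := by linear_combination f * hb
    have hmem := sub_mem
      (Ideal.mem_sup_left (Ideal.mul_mem_left _ b (Ideal.mem_span_singleton_self (a * f + s))))
      (Ideal.mem_sup_right (Ideal.mul_mem_left _ b hs))
    rwa [hf] at hmem

lemma exists_mul_add_eq_of_mem_ofList_cons {f z : A} {l : List A}
    (h : z ∈ Ideal.ofList (f :: l)) : ∃ a, ∃ s ∈ Ideal.ofList l, a * f + s = z := by
  obtain ⟨y, hy, s, hs, rfl⟩ := Submodule.mem_sup.1 (Ideal.ofList_cons f l ▸ h)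
  obtain ⟨a, rfl⟩ := Ideal.mem_span_singleton'.1 hy
  exact ⟨a, s, hs, rfl⟩

lemma isSMulRegular_quotient_mul_add_of_isUnit {a f s : A} {I : Ideal A} (ha : IsUnit a)
    (hs : s ∈ I) (hf : IsSMulRegular (A ⧸ I) f) : IsSMulRegular (A ⧸ I) (a * f + s) := by
  have hsmul (x : A ⧸ I) : (a * f + s) • x = a • f • x := by
    simp [Algebra.smul_def, Ideal.Quotient.eq_zero_iff_mem.2 hs, mul_assoc]
  intro x y hxy
  simp only [hsmul] at hxy
  exact hf (ha.isSMulRegular _ hxy)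

lemma isWeaklyRegular_append_singleton_iff {l : List A} {f : A} :
    IsWeaklyRegular A (l ++ [f]) ↔
      IsWeaklyRegular A l ∧ IsSMulRegular (A ⧸ Ideal.ofList l) f := by
  rw [isWeaklyRegular_append_iff, isWeaklyRegular_singleton_iff]
  have e := Submodule.quotEquivOfEq (Ideal.ofList l • ⊤) (Ideal.ofList l) (by simp)
  exact and_congr_right fun _ => e.isSMulRegular_congr f

lemma isRegular_iff_isWeaklyRegular_and_ne_top {l : List A} :
    IsRegular A l ↔ IsWeaklyRegular A l ∧ Ideal.ofList l ≠ ⊤ := by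
  rw [isRegular_iff, smul_eq_mul, Ideal.mul_top]
  exact and_congr_right fun _ => ne_comm

variable [IsLocalRing A]

lemma exists_perm_cons_of_mem_of_notMem_mul {z : A} {l : List A} (hz : z ∈ Ideal.ofList l)
    (hz' : z ∉ maximalIdeal A * Ideal.ofList l) :
    ∃ f l' a, ∃ s ∈ Ideal.ofList l', l.Perm (f :: l') ∧ IsUnit a ∧ a * f + s = z := by
  induction l generalizing z with
  | nil => exact absurd (by simpa using hz) hz'
  | cons f l ih =>
    obtain ⟨a, s, hs, rfl⟩ := exists_mul_add_eq_of_mem_ofList_cons hz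
    by_cases ha : IsUnit a
    · exact ⟨f, l, a, s, hs, .refl _, ha, rfl⟩
    have hsl : s ∉ maximalIdeal A * Ideal.ofList l := fun h => hz' <| add_mem
      (Ideal.mul_mem_mul ((mem_maximalIdeal a).2 ha) (Ideal.subset_span List.mem_cons_self))
      (Ideal.mul_mono_right (Ideal.span_mono fun _ => List.mem_cons_of_mem f) h)
    obtain ⟨g, l', b, t, ht, hperm, hb, rfl⟩ := ih hs hsl
    refine ⟨g, f :: l', b, a * f + t, ?_, (hperm.cons f).trans (.swap _ _ _), hb, by ring⟩
    rw [Ideal.ofList_cons]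
    exact add_mem (Ideal.mem_sup_left (Ideal.mul_mem_left _ a (Ideal.mem_span_singleton_self f)))
      (Ideal.mem_sup_right ht)

variable [IsNoetherianRing A]

lemma isRegular_cons_mul_add_of_isUnit {a f s : A} {l : List A} (h : IsRegular A (f :: l))
    (ha : IsUnit a) (hs : s ∈ Ideal.ofList l) : IsRegular A ((a * f + s) :: l) := by
  have hlf := isWeaklyRegular_append_singleton_iff.1
    (isRegular_of_perm h (List.perm_append_singleton f l).symm).1
  have hlz := isWeaklyRegular_append_singleton_iff.2
    ⟨hlf.1, isSMulRegular_quotient_mul_add_of_isUnit ha hs hlf.2⟩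
  have hperm := List.perm_append_singleton (a * f + s) l
  refine isRegular_of_perm (isRegular_iff_isWeaklyRegular_and_ne_top.2 ⟨hlz, ?_⟩) hperm
  rw [ofList_eq_of_perm hperm, ofList_cons_mul_add_of_isUnit ha hs]
  exact (isRegular_iff_isWeaklyRegular_and_ne_top.1 h).2

lemma isRegular_cons_of_sub_mem {f g : A} {l : List A} (h : IsRegular A (f :: l))
    (hfg : g - f ∈ maximalIdeal A * Ideal.ofList (f :: l)) :
    IsRegular A (g :: l) ∧ Ideal.ofList (g :: l) = Ideal.ofList (f :: l) := by
  rw [Ideal.ofList_cons, Ideal.mul_sup, Submodule.mem_sup] at hfg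
  obtain ⟨y, hy, s, hs, hys⟩ := hfg
  rw [mul_comm, Ideal.mem_span_singleton_mul] at hy
  obtain ⟨b, hb, rfl⟩ := hy
  obtain rfl : (1 + b) * f + s = g := by linear_combination hys
  have hunit : IsUnit (1 + b) := by
    simpa [sub_neg_eq_add] using isUnit_one_sub_self_of_mem_nonunits (-b) (neg_mem hb)
  have hsl : s ∈ Ideal.ofList l := Ideal.mul_le_right hs
  exact ⟨isRegular_cons_mul_add_of_isUnit h hunit hsl, ofList_cons_mul_add_of_isUnit hunit hsl⟩

lemma isRegular_append_map_of_sub_mem {σ : A → A} (l₀ l : List A) (h : IsRegular A (l₀ ++ l))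
    (hσ : ∀ x ∈ l, σ x - x ∈ maximalIdeal A * Ideal.ofList (l₀ ++ l)) :
    IsRegular A (l₀ ++ l.map σ) ∧ Ideal.ofList (l₀ ++ l.map σ) = Ideal.ofList (l₀ ++ l) := by
  induction l generalizing l₀ with
  | nil => exact ⟨h, rfl⟩
  | cons f l ih =>
    have hperm (x : A) : (l₀ ++ x :: l).Perm (x :: (l₀ ++ l)) := List.perm_middle
    have hspan := ofList_eq_of_perm (hperm f)
    obtain ⟨hreg, heq⟩ := isRegular_cons_of_sub_mem (isRegular_of_perm h (hperm f))
      (hspan ▸ hσ f List.mem_cons_self)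
    have hspan' : Ideal.ofList ((l₀ ++ [σ f]) ++ l) = Ideal.ofList (l₀ ++ f :: l) := by
      rw [List.append_assoc, List.singleton_append,
        ofList_eq_of_perm (hperm (σ f)), heq, hspan]
    have := ih (l₀ ++ [σ f]) (by simpa using isRegular_of_perm hreg (hperm (σ f)).symm)
      fun x hx => hspan' ▸ hσ x (List.mem_cons_of_mem f hx)
    rw [hspan'] at this
    simpa only [List.append_assoc, List.singleton_append, List.map_cons] using this

lemma isRegular_map_of_sub_mem {σ : A → A} {l : List A} (h : IsRegular A l)
    (hσ : ∀ x ∈ l, σ x - x ∈ maximalIdeal A * Ideal.ofList l) :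
    IsRegular A (l.map σ) ∧ Ideal.ofList (l.map σ) = Ideal.ofList l :=
  isRegular_append_map_of_sub_mem [] l h hσ

end RegularSequence

section Surjection

variable {E F G : Type*} [CommRing E] [CommRing F] [CommRing G] {ψ : E →+* F}

lemma isWeaklyRegular_quotient_ker_iff (hψ : Function.Surjective ψ) (l : List E) :
    IsWeaklyRegular (E ⧸ RingHom.ker ψ) l ↔ IsWeaklyRegular F (l.map ψ) := by
  let e := RingHom.quotientKerEquivOfSurjective hψ
  refine AddEquiv.isWeaklyRegular_congr (e := e.toAddEquiv) ?_
  rw [List.forall₂_map_right_iff, List.forall₂_same]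
  intro r _ x
  obtain ⟨x, rfl⟩ := Ideal.Quotient.mk_surjective x
  change e (Ideal.Quotient.mk _ (r * x)) = ψ r * e (Ideal.Quotient.mk _ x)
  simp [e]

lemma isWeaklyRegular_append_iff_of_ker_eq (hψ : Function.Surjective ψ) {l₁ l₂ : List E}
    (h : RingHom.ker ψ = Ideal.ofList l₁) :
    IsWeaklyRegular E (l₁ ++ l₂) ↔ IsWeaklyRegular E l₁ ∧ IsWeaklyRegular F (l₂.map ψ) := by
  rw [isWeaklyRegular_append_iff, ← isWeaklyRegular_quotient_ker_iff hψ]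
  have e := Submodule.quotEquivOfEq (Ideal.ofList l₁ • ⊤) (RingHom.ker ψ) (by simp [h])
  exact and_congr_right fun _ => e.isWeaklyRegular_congr _

lemma ker_comp_eq_ofList_append (hψ : Function.Surjective ψ) (χ : F →+* G) {l₁ l₂ : List E}
    (h₁ : RingHom.ker ψ = Ideal.ofList l₁) (h₂ : RingHom.ker χ = Ideal.ofList (l₂.map ψ)) :
    RingHom.ker (χ.comp ψ) = Ideal.ofList (l₁ ++ l₂) := by
  rw [← RingHom.comap_ker, h₂, ← Ideal.map_ofList, Ideal.comap_map_of_surjective _ hψ, sup_comm,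
    Ideal.ofList_append, ← h₁]
  rfl

end Surjection

lemma generatedByRegularSequence_ker_comp {E F G : Type u} [CommRing E] [CommRing F] [CommRing G]
    {ψ : E →+* F} (hψ : Function.Surjective ψ) {χ : F →+* G}
    (h₁ : GeneratedByRegularSequence E (RingHom.ker ψ))
    (h₂ : GeneratedByRegularSequence F (RingHom.ker χ)) :
    GeneratedByRegularSequence E (RingHom.ker (χ.comp ψ)) := by
  obtain ⟨l₁, hl₁, hker₁⟩ := h₁
  obtain ⟨l₂, hl₂, hker₂⟩ := h₂
  obtain ⟨l₂, rfl⟩ := List.map_surjective_iff.2 hψ l₂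
  have hker := ker_comp_eq_ofList_append hψ χ hker₁.symm hker₂.symm
  refine ⟨l₁ ++ l₂, isRegular_iff_isWeaklyRegular_and_ne_top.2
    ⟨(isWeaklyRegular_append_iff_of_ker_eq hψ hker₁.symm).2 ⟨hl₁.1, hl₂.1⟩, ?_⟩, hker.symm⟩
  rw [← hker, ← RingHom.comap_ker, ← hker₂]
  exact Ideal.comap_ne_top ψ (isRegular_iff_isWeaklyRegular_and_ne_top.1 hl₂).2

section RegularLocalRing

lemma spanFinrank_ofList_le_length {A : Type*} [CommRing A] (l : List A) :
    (Ideal.ofList l).spanFinrank ≤ l.length := by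
  classical
  refine (Submodule.spanFinrank_span_le_ncard_of_finite l.finite_toSet).trans ?_
  rw [← List.coe_toFinset, Set.ncard_coe_finset]
  exact l.toFinset_card_le

lemma exists_ofList_eq_of_fg {A : Type*} [CommRing A] {I : Ideal A} (hI : I.FG) :
    ∃ l, Ideal.ofList l = I ∧ l.length = I.spanFinrank := by
  obtain ⟨s, hcard, hspan⟩ := Submodule.FG.exists_span_finset_card_eq_spanFinrank hI
  exact ⟨s.toList, by simpa [Ideal.ofList, Ideal.span] using hspan, by simpa using hcard⟩

lemma exists_mem_maximalIdeal_notMem_sq {A : Type*} [CommRing A] [IsLocalRing A]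
    [IsNoetherianRing A] (h : maximalIdeal A ≠ ⊥) :
    ∃ x ∈ maximalIdeal A, x ∉ maximalIdeal A * maximalIdeal A :=
  SetLike.not_le_iff_exists.1 fun hle => h <|
    Submodule.eq_bot_of_le_smul_of_le_jacobson_bot _ _ (IsNoetherian.noetherian _) hle
      (maximalIdeal_le_jacobson _)

lemma isRegularLocalRing_of_ofList_eq_maximalIdeal {A : Type*} [CommRing A] [IsLocalRing A]
    [IsNoetherianRing A] {l : List A} (hl : IsRegular A l) (h : Ideal.ofList l = maximalIdeal A) :
    IsRegularLocalRing A := by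
  refine .of_spanFinrank_maximalIdeal_le _ ?_
  have hdim := ringKrullDim_add_length_eq_ringKrullDim_of_isRegular l hl
  rw [h, ringKrullDim_eq_zero_of_isField
    ((Ideal.Quotient.maximal_ideal_iff_isField_quotient _).1 inferInstance), zero_add] at hdim
  rw [← hdim, ← h]
  exact_mod_cast spanFinrank_ofList_le_length l

lemma exists_ofList_cons_eq_maximalIdeal {A : Type*} [CommRing A] [IsLocalRing A]
    [IsNoetherianRing A] {x : A} (hx : x ∈ maximalIdeal A)
    (hx' : x ∉ maximalIdeal A * maximalIdeal A) :
    ∃ l, Ideal.ofList (x :: l) = maximalIdeal A ∧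
      l.length + 1 = (maximalIdeal A).spanFinrank := by
  obtain ⟨l, hspan, hlen⟩ := exists_ofList_eq_of_fg (maximalIdeal A).fg_of_isNoetherianRing
  obtain ⟨f, l', a, s, hs, hperm, ha, rfl⟩ :=
    exists_perm_cons_of_mem_of_notMem_mul (hspan ▸ hx) (by rwa [hspan])
  refine ⟨l', ?_, by rw [← hlen, hperm.length_eq, List.length_cons]⟩
  rw [ofList_cons_mul_add_of_isUnit ha hs, ← ofList_eq_of_perm hperm, hspan]

lemma spanFinrank_maximalIdeal_quotient_lt {A : Type*} [CommRing A] [IsLocalRing A]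
    [IsNoetherianRing A] {x : A} [IsLocalRing (A ⧸ Ideal.span {x})] (hx : x ∈ maximalIdeal A)
    (hx' : x ∉ maximalIdeal A * maximalIdeal A) :
    (maximalIdeal (A ⧸ Ideal.span {x})).spanFinrank + 1 ≤ (maximalIdeal A).spanFinrank := by
  obtain ⟨l, hspan, hlen⟩ := exists_ofList_cons_eq_maximalIdeal hx hx'
  have hmap : maximalIdeal (A ⧸ Ideal.span {x}) =
      Ideal.ofList (l.map (Ideal.Quotient.mk (Ideal.span {x}))) := by
    rw [← map_maximalIdeal_of_surjective _ Ideal.Quotient.mk_surjective, ← hspan,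
      Ideal.map_ofList, List.map_cons, Ideal.ofList_cons,
      Ideal.Quotient.eq_zero_iff_mem.2 (Ideal.mem_span_singleton_self x)]
    simp
  rw [← hlen, hmap]
  simpa using spanFinrank_ofList_le_length (l.map (Ideal.Quotient.mk (Ideal.span {x})))

lemma isLocalRing_quotient_span_singleton {A : Type*} [CommRing A] [IsLocalRing A] {x : A}
    (hx : x ∈ maximalIdeal A) : IsLocalRing (A ⧸ Ideal.span {x}) :=
  have : Nontrivial (A ⧸ Ideal.span {x}) := Ideal.Quotient.nontrivial_iff.2 fun h =>
    (mem_maximalIdeal x).1 hx (Ideal.span_singleton_eq_top.1 h)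
  .of_surjective' _ Ideal.Quotient.mk_surjective

-- A minimal prime `P` below the prime `(x)` with `x ∉ P` satisfies `P = xP`.
lemma isDomain_of_isDomain_quotient_span_singleton {A : Type*} [CommRing A] [IsLocalRing A]
    [IsNoetherianRing A] {x : A} [IsDomain (A ⧸ Ideal.span {x})]
    (hx : ∀ P ∈ minimalPrimes A, x ∉ P) : IsDomain A := by
  have hprime : (Ideal.span {x}).IsPrime := (Ideal.Quotient.isDomain_iff_prime _).1 inferInstance
  obtain ⟨P, hP, hPx⟩ := Ideal.exists_minimalPrimes_le (bot_le : (⊥ : Ideal A) ≤ Ideal.span {x})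
  have hPprime : P.IsPrime := hP.1.1
  have hle : P ≤ Ideal.span {x} * P := by
    intro p hp
    obtain ⟨a, hap⟩ := Ideal.mem_span_singleton'.1 (hPx hp)
    have ha : a ∈ P := (hPprime.mem_or_mem (hap ▸ hp)).resolve_right (hx P hP)
    exact Ideal.mem_span_singleton_mul.2 ⟨a, ha, by rw [mul_comm, hap]⟩
  have hbot : P = ⊥ := Submodule.eq_bot_of_le_smul_of_le_jacobson_bot (Ideal.span {x}) P
    (IsNoetherian.noetherian P) hle
    ((le_maximalIdeal hprime.ne_top).trans (maximalIdeal_le_jacobson _))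
  have : (⊥ : Ideal A).IsPrime := hbot ▸ hPprime
  exact IsDomain.of_bot_isPrime A

variable {A : Type*} [CommRing A] [IsRegularLocalRing A]

lemma isRegularLocalRing_quotient_span_singleton {x : A} (hx : x ∈ maximalIdeal A)
    (hx' : x ∉ maximalIdeal A * maximalIdeal A) : IsRegularLocalRing (A ⧸ Ideal.span {x}) := by
  have := isLocalRing_quotient_span_singleton hx
  refine .of_spanFinrank_maximalIdeal_le _ ?_
  have hdim := ringKrullDim_le_ringKrullDim_quotient_add_card {x}
    (by simpa [IsLocalRing.ringJacobson_eq_maximalIdeal] using hx)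
  rw [← IsRegularLocalRing.spanFinrank_maximalIdeal, Finset.coe_singleton,
    Finset.card_singleton] at hdim
  have hrank : ((maximalIdeal (A ⧸ Ideal.span {x})).spanFinrank : WithBot ℕ∞) + 1 ≤
      (maximalIdeal A).spanFinrank := by
    exact_mod_cast spanFinrank_maximalIdeal_quotient_lt hx hx'
  exact ENat.WithBot.add_le_add_one_right_iff.1 (hrank.trans hdim)

lemma exists_mem_maximalIdeal_notMem_sq_notMem_minimalPrimes (h : maximalIdeal A ≠ ⊥) :
    ∃ x ∈ maximalIdeal A, x ∉ maximalIdeal A * maximalIdeal A ∧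
      ∀ P ∈ minimalPrimes A, x ∉ P := by
  have hnot : ¬ ∃ I ∈ insert (maximalIdeal A * maximalIdeal A) (minimalPrimes A),
      maximalIdeal A ≤ I := by
    rintro ⟨I, rfl | hI, hle⟩
    · obtain ⟨x, hx, hx'⟩ := exists_mem_maximalIdeal_notMem_sq h
      exact hx' (hle hx)
    · have := hI.1.1
      obtain rfl := (maximalIdeal.isMaximal A).eq_of_le this.ne_top hle
      have hzero : ((maximalIdeal A).spanFinrank : WithBot ℕ∞) = 0 := by
        rw [IsRegularLocalRing.spanFinrank_maximalIdeal, ← maximalIdeal_height_eq_ringKrullDim,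
          Ideal.height_eq_zero_iff.2 hI, WithBot.coe_zero]
      exact h ((Submodule.spanFinrank_eq_zero_iff_eq_bot
        (maximalIdeal A).fg_of_isNoetherianRing).1 (by exact_mod_cast hzero))
  rw [← Ideal.subset_union_prime_finite (f := fun I => I)
    ((minimalPrimes.finite_of_isNoetherianRing A).insert _)
    (maximalIdeal A * maximalIdeal A) (maximalIdeal A * maximalIdeal A)
    fun I hI hne _ => (hI.resolve_left hne).1.1] at hnot
  obtain ⟨x, hx, hx'⟩ := Set.not_subset.1 hnot
  simp only [Set.mem_insert_iff, Set.iUnion_iUnion_eq_or_left, Set.mem_union,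
    SetLike.mem_coe, Set.mem_iUnion, exists_prop, not_or, not_exists, not_and] at hx'
  exact ⟨x, hx, hx'⟩

instance isDomain_of_isRegularLocalRing : IsDomain A := by
  induction h : (maximalIdeal A).spanFinrank using Nat.strong_induction_on generalizing A with
  | h n ih =>
    by_cases hbot : maximalIdeal A = ⊥
    · exact (isField_iff_maximalIdeal_eq.2 hbot).isDomain
    · obtain ⟨x, hx, hx', hmin⟩ := exists_mem_maximalIdeal_notMem_sq_notMem_minimalPrimes hbot
      have := isRegularLocalRing_quotient_span_singleton hx hx'
      have := ih _ (h ▸ spanFinrank_maximalIdeal_quotient_lt hx hx') rfl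
      exact isDomain_of_isDomain_quotient_span_singleton hmin

lemma generatedByRegularSequence_span_singleton {A : Type u} [CommRing A] [IsDomain A] {x : A}
    (hx : x ≠ 0) (hx' : ¬ IsUnit x) : GeneratedByRegularSequence A (Ideal.span {x}) := by
  refine ⟨[x], isRegular_iff_isWeaklyRegular_and_ne_top.2 ⟨?_, ?_⟩, Ideal.ofList_singleton x⟩
  · exact (isWeaklyRegular_singleton_iff A x).2 (IsSMulRegular.of_ne_zero hx)
  · rwa [Ideal.ofList_singleton, Ne, Ideal.span_singleton_eq_top]

lemma generatedByRegularSequence_ker_of_ker_quotientLift {A T : Type u} [CommRing A] [CommRing T]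
    [IsDomain A] {φ : A →+* T} {x : A} (hx : x ≠ 0) (hx' : ¬ IsUnit x)
    (hφ : ∀ a ∈ Ideal.span {x}, φ a = 0)
    (h : GeneratedByRegularSequence (A ⧸ Ideal.span {x})
      (RingHom.ker (Ideal.Quotient.lift (Ideal.span {x}) φ hφ))) :
    GeneratedByRegularSequence A (RingHom.ker φ) := by
  have hcomp := generatedByRegularSequence_ker_comp Ideal.Quotient.mk_surjective
    (by rw [Ideal.mk_ker]; exact generatedByRegularSequence_span_singleton hx hx') h
  rwa [Ideal.Quotient.lift_comp_mk] at hcomp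

lemma spanFinrank_maximalIdeal_le_of_ker_le {E T : Type*} [CommRing E] [CommRing T]
    [IsLocalRing E] [IsLocalRing T] [IsNoetherianRing E] [IsNoetherianRing T] {φ : E →+* T}
    (hφ : Function.Surjective φ) (hker : RingHom.ker φ ≤ maximalIdeal E * maximalIdeal E) :
    (maximalIdeal E).spanFinrank ≤ (maximalIdeal T).spanFinrank := by
  obtain ⟨t, hspan, hlen⟩ := exists_ofList_eq_of_fg (maximalIdeal T).fg_of_isNoetherianRing
  obtain ⟨t, rfl⟩ := List.map_surjective_iff.2 hφ t
  have := hφ.isLocalHom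
  have hcomap : maximalIdeal E = Ideal.ofList t ⊔ RingHom.ker φ := by
    rw [← maximalIdeal_comap φ, ← hspan, ← Ideal.map_ofList, Ideal.comap_map_of_surjective _ hφ]
    rfl
  have hgen : Ideal.ofList t = maximalIdeal E :=
    (hcomap ▸ le_sup_left).antisymm <| Submodule.le_of_le_smul_of_le_jacobson_bot
      (IsNoetherian.noetherian _) (maximalIdeal_le_jacobson _)
      (hcomap.le.trans (sup_le_sup_left hker _))
  rw [← hgen, ← hlen, List.length_map]
  exact spanFinrank_ofList_le_length t

lemma ker_eq_bot_of_ker_le {E T : Type*} [CommRing E] [CommRing T] [IsRegularLocalRing E]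
    [IsRegularLocalRing T] {φ : E →+* T} (hφ : Function.Surjective φ)
    (hker : RingHom.ker φ ≤ maximalIdeal E * maximalIdeal E) : RingHom.ker φ = ⊥ := by
  refine (Submodule.eq_bot_iff _).2 fun r hr => by_contra fun hr0 => ?_
  have hdim := ringKrullDim_succ_le_of_surjective φ hφ (mem_nonZeroDivisors_of_ne_zero hr0) hr
  rw [← IsRegularLocalRing.spanFinrank_maximalIdeal (R := E),
    ← IsRegularLocalRing.spanFinrank_maximalIdeal (R := T)] at hdim
  exact absurd (spanFinrank_maximalIdeal_le_of_ker_le hφ hker)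
    (Nat.not_le.2 (by exact_mod_cast hdim))

lemma generatedByRegularSequence_ker_of_isRegularLocalRing {E T : Type u} [CommRing E]
    [CommRing T] [IsRegularLocalRing E] [IsRegularLocalRing T] {φ : E →+* T}
    (hφ : Function.Surjective φ) : GeneratedByRegularSequence E (RingHom.ker φ) := by
  induction h : (maximalIdeal E).spanFinrank using Nat.strong_induction_on generalizing E with
  | h n ih =>
    by_cases hker : RingHom.ker φ ≤ maximalIdeal E * maximalIdeal E
    · exact ⟨[], .nil E E, by simp [ker_eq_bot_of_ker_le hφ hker]⟩
    · obtain ⟨x, hxφ, hx'⟩ := SetLike.not_le_iff_exists.1 hker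
      have hx : x ∈ maximalIdeal E := le_maximalIdeal (RingHom.ker_ne_top φ) hxφ
      have := isRegularLocalRing_quotient_span_singleton hx hx'
      have hle : Ideal.span {x} ≤ RingHom.ker φ := (Ideal.span_singleton_le_iff_mem _).2 hxφ
      have hlift := ih _ (h ▸ spanFinrank_maximalIdeal_quotient_lt hx hx')
        (Ideal.Quotient.lift_surjective_of_surjective (Ideal.span {x}) hle hφ) rfl
      exact generatedByRegularSequence_ker_of_ker_quotientLift
        (fun h0 : x = 0 => hx' (h0 ▸ zero_mem _)) hx hle hlift

lemma isRegularLocal_iff_isRegularLocalRing {A : Type u} [CommRing A] :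
    IsRegularLocal A ↔ IsRegularLocalRing A :=
  ⟨fun ⟨_, _, _, hl, h⟩ => isRegularLocalRing_of_ofList_eq_maximalIdeal hl h,
    fun _ => ⟨inferInstance, inferInstance, ker_residue (R := A) ▸
      generatedByRegularSequence_ker_of_isRegularLocalRing residue_surjective⟩⟩

end RegularLocalRing

section LocalFlatness

lemma mem_of_forall_mem_sup_maximalIdeal_pow {E : Type*} [CommRing E] [IsLocalRing E]
    [IsNoetherianRing E] {J : Ideal E} {x : E} (h : ∀ n : ℕ, x ∈ J ⊔ maximalIdeal E ^ n) :
    x ∈ J := by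
  have hkrull := Ideal.iInf_pow_smul_eq_bot_of_isLocalRing (M := E ⧸ J) (maximalIdeal E)
    (Ideal.IsPrime.ne_top inferInstance)
  rw [← Ideal.Quotient.eq_zero_iff_mem, ← Submodule.mem_bot E, ← hkrull, Submodule.mem_iInf]
  intro n
  obtain ⟨j, hj, y, hy, rfl⟩ := Submodule.mem_sup.1 (h n)
  have hsmul : Ideal.Quotient.mk J (j + y) = y • (1 : E ⧸ J) := by
    simp [Algebra.smul_def, Ideal.Quotient.eq_zero_iff_mem.2 hj]
  exact hsmul ▸ Submodule.smul_mem_smul hy trivial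

lemma mk_mem_smul_top_iff {E : Type*} [CommRing E] {I J : Ideal E} {e : E} :
    Ideal.Quotient.mk I e ∈ (J • ⊤ : Submodule E (E ⧸ I)) ↔ e ∈ J ⊔ I := by
  have hmap : (J • ⊤ : Submodule E (E ⧸ I)) = Submodule.map I.mkQ J := by
    rw [← I.range_mkQ, ← Submodule.map_top, ← Submodule.map_smul'', smul_eq_mul, Ideal.mul_top]
  rw [hmap, sup_comm, ← Submodule.comap_map_mkQ]
  rfl

lemma isWeaklyRegular_quotient_iff_forall_mem {E : Type*} [CommRing E] {I : Ideal E}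
    {l : List E} :
    IsWeaklyRegular (E ⧸ I) l ↔ ∀ (i : ℕ) (h : i < l.length) (e : E),
      l[i] * e ∈ Ideal.ofList (l.take i) ⊔ I → e ∈ Ideal.ofList (l.take i) ⊔ I := by
  rw [isWeaklyRegular_iff]
  refine forall₂_congr fun i hi => ?_
  rw [isSMulRegular_iff_right_eq_zero_of_smul,
    ((Submodule.mkQ_surjective _).comp Ideal.Quotient.mk_surjective).forall]
  refine forall_congr' fun e => ?_
  rw [← mk_mem_smul_top_iff, ← mk_mem_smul_top_iff, ← Submodule.Quotient.mk_eq_zero,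
    ← Submodule.Quotient.mk_eq_zero]
  rfl

section Exact

variable {E A B C : Type*} [CommRing E] [AddCommGroup A] [AddCommGroup B] [AddCommGroup C]
  [Module E A] [Module E B] [Module E C] {f : A →ₗ[E] B} {g : B →ₗ[E] C}

lemma quotSMulTop_map_injective_of_exact {r : E} (hf : Function.Injective f)
    (hfg : Function.Exact f g) (hr : IsSMulRegular C r) :
    Function.Injective (QuotSMulTop.map r f) := by
  have hzero : Function.Exact (0 : PUnit →ₗ[E] A) f :=
    LinearMap.exact_zero_iff_injective PUnit f |>.2 hf
  have hmap := QuotSMulTop.map_first_exact_on_four_term_exact_of_isSMulRegular_last hzero hfg hr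
  rw [map_zero] at hmap
  exact (LinearMap.exact_zero_iff_injective _ _).1 hmap

lemma isWeaklyRegular_of_exact {l : List E} (hf : Function.Injective f)
    (hfg : Function.Exact f g) (hg : Function.Surjective g) (hA : IsWeaklyRegular A l)
    (hC : IsWeaklyRegular C l) : IsWeaklyRegular B l := by
  induction l generalizing A B C with
  | nil => exact .nil E B
  | cons r l ih =>
    rw [isWeaklyRegular_cons_iff] at hA hC ⊢
    exact ⟨isSMulRegular_of_range_eq_ker hf hfg.linearMap_ker_eq.symm hA.1 hC.1,
      ih (quotSMulTop_map_injective_of_exact hf hfg hC.1) (QuotSMulTop.map_exact r hfg hg)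
        (QuotSMulTop.map_surjective r hg) hA.2 hC.2⟩

end Exact

variable {R E : Type u} [CommRing R] [CommRing E] [IsLocalRing R] [Algebra R E]

lemma eq_maximalIdeal_of_linearEquiv_quotient {N : Type*} [AddCommGroup N] [Module R N]
    {p : Ideal R} [p.IsPrime] (e : N ≃ₗ[R] R ⧸ p) {n : ℕ}
    (hn : ∀ r ∈ maximalIdeal R ^ n, ∀ x : N, r • x = 0) : p = maximalIdeal R := by
  refine (le_maximalIdeal (Ideal.IsPrime.ne_top ‹_›)).antisymm
    (Ideal.IsPrime.le_of_pow_le (n := n) fun r hr => ?_)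
  have hr1 := hn r hr (e.symm 1)
  rw [← map_smul, map_eq_zero_iff _ e.symm.injective] at hr1
  simpa [Algebra.smul_def, Ideal.Quotient.eq_zero_iff_mem] using hr1

variable [IsNoetherianRing R] [Module.Flat R E] {l : List E}

lemma isWeaklyRegular_tensorProduct_of_pow_smul_eq_zero
    (hl : IsWeaklyRegular (E ⧸ (maximalIdeal R).map (algebraMap R E)) l) {n : ℕ} (N : Type u)
    [AddCommGroup N] [Module R N] [hN : Module.Finite R N]
    (hn : ∀ r ∈ maximalIdeal R ^ n, ∀ x : N, r • x = 0) : IsWeaklyRegular (E ⊗[R] N) l := by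
  revert hn
  induction hN using IsNoetherianRing.induction_on_isQuotientEquivQuotientPrime R with
  | subsingleton N =>
    refine fun _ => (isWeaklyRegular_iff _ _).2 fun i hi x y _ => ?_
    have : Subsingleton ((E ⊗[R] N) ⧸ (Ideal.ofList (l.take i) • ⊤ : Submodule E (E ⊗[R] N))) :=
      (Submodule.mkQ_surjective _).subsingleton
    exact Subsingleton.elim x y
  | quotient N p e =>
    intro hn
    have hp : p.1 = maximalIdeal R := eq_maximalIdeal_of_linearEquiv_quotient e hn
    let e' : E ⊗[R] N ≃ₗ[E] E ⊗[R] (R ⧸ p.1) := AlgebraTensorModule.congr (.refl E E) e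
    refine ((e'.trans (Algebra.TensorProduct.quotIdealMapEquivTensorQuot E
      p.1).toLinearEquiv.symm).isWeaklyRegular_congr l).2 ?_
    rwa [hp]
  | exact N₁ N₂ N₃ f g hf hg hfg h₁ h₃ =>
    intro hn
    refine isWeaklyRegular_of_exact (f := AlgebraTensorModule.map (LinearMap.id : E →ₗ[E] E) f)
      (g := AlgebraTensorModule.map (LinearMap.id : E →ₗ[E] E) g)
      (Module.Flat.lTensor_preserves_injective_linearMap f hf) (lTensor_exact E hfg hg)
      (LinearMap.lTensor_surjective E hg) (h₁ fun r hr x => hf ?_) (h₃ fun r hr x => ?_)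
    · rw [map_smul, hn r hr, map_zero]
    · obtain ⟨x, rfl⟩ := hg x
      rw [← map_smul, hn r hr, map_zero]

lemma isWeaklyRegular_quotient_map_maximalIdeal_pow
    (hl : IsWeaklyRegular (E ⧸ (maximalIdeal R).map (algebraMap R E)) l) (n : ℕ) :
    IsWeaklyRegular (E ⧸ (maximalIdeal R ^ n).map (algebraMap R E)) l := by
  refine ((Algebra.TensorProduct.quotIdealMapEquivTensorQuot E
    (maximalIdeal R ^ n)).toLinearEquiv.isWeaklyRegular_congr l).2
    (isWeaklyRegular_tensorProduct_of_pow_smul_eq_zero hl (n := n) _ fun r hr x => ?_)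
  rw [Algebra.smul_def, Ideal.Quotient.algebraMap_eq, Ideal.Quotient.eq_zero_iff_mem.2 hr,
    zero_mul]

lemma isWeaklyRegular_of_isWeaklyRegular_fibre [IsLocalRing E] [IsNoetherianRing E]
    [IsLocalHom (algebraMap R E)]
    (hl : IsWeaklyRegular (E ⧸ (maximalIdeal R).map (algebraMap R E)) l) :
    IsWeaklyRegular E l := by
  refine ((Submodule.quotEquivOfEqBot _ rfl).isWeaklyRegular_congr l).1
    (isWeaklyRegular_quotient_iff_forall_mem.2 fun i hi e he => ?_)
  rw [sup_bot_eq] at he ⊢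
  refine mem_of_forall_mem_sup_maximalIdeal_pow fun n => ?_
  have hpow : (maximalIdeal R ^ n).map (algebraMap R E) ≤ maximalIdeal E ^ n := by
    rw [Ideal.map_pow]
    exact Ideal.pow_right_mono (((local_hom_TFAE (algebraMap R E)).out 0 2).1 ‹_›) n
  exact sup_le_sup_left hpow _ (isWeaklyRegular_quotient_iff_forall_mem.1
    (isWeaklyRegular_quotient_map_maximalIdeal_pow hl n) i hi e (Ideal.mem_sup_left he))

end LocalFlatness

section KernelOfSurjection

variable {R E T : Type*} [CommRing R] [CommRing E] [CommRing T] [Algebra R E] [Algebra R T]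

lemma exists_eq_sum_smul_of_mem_map {I : Ideal R} {x : E} (hx : x ∈ I.map (algebraMap R E)) :
    ∃ (n : ℕ) (a : Fin n → R) (e : Fin n → E), (∀ i, a i ∈ I) ∧ x = ∑ i, a i • e i := by
  obtain ⟨n, f, g, rfl⟩ := Submodule.mem_span_set'.1 hx
  choose a ha ha' using fun i => (g i).2
  exact ⟨n, a, f, ha, by simp [Algebra.smul_def, ha', mul_comm]⟩

variable {φ : E →ₐ[R] T}

lemma sum_smul_mem_mul_ker [Module.Flat R T] (hφ : Function.Surjective φ) {I : Ideal R} {n : ℕ}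
    {a : Fin n → R} {e : Fin n → E} (ha : ∀ i, a i ∈ I) (h : φ (∑ i, a i • e i) = 0) :
    ∑ i, a i • e i ∈ I.map (algebraMap R E) * RingHom.ker φ := by
  simp only [map_sum, map_smul] at h
  obtain ⟨k, c, y, hy, hc⟩ := Module.Flat.isTrivialRelation_of_sum_smul_eq_zero (R := R) (M := T) h
  choose z hz using fun j => hφ (y j)
  have hsum : ∑ i, a i • e i = ∑ i, algebraMap R E (a i) * (e i - ∑ j, c i j • z j) := by
    have hzero : ∑ i, ∑ j, a i • c i j • z j = 0 := by
      rw [Finset.sum_comm]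
      simp only [smul_smul, ← Finset.sum_smul, hc, zero_smul, Finset.sum_const_zero]
    simp only [← Algebra.smul_def, smul_sub, Finset.sum_sub_distrib, Finset.smul_sum, hzero,
      sub_zero]
  rw [hsum]
  refine Ideal.sum_mem _ fun i _ => Ideal.mul_mem_mul (Ideal.mem_map_of_mem _ (ha i)) ?_
  simp [RingHom.mem_ker, hy, hz]

lemma ker_inf_map_le_map_mul_ker [Module.Flat R T] (hφ : Function.Surjective φ) (I : Ideal R) :
    RingHom.ker φ ⊓ I.map (algebraMap R E) ≤ I.map (algebraMap R E) * RingHom.ker φ := by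
  rintro x ⟨hx, hxI⟩
  obtain ⟨n, a, e, ha, rfl⟩ := exists_eq_sum_smul_of_mem_map hxI
  exact sum_smul_mem_mul_ker hφ ha hx

lemma comap_map_algebraMap_eq_sup_ker (hφ : Function.Surjective φ) (I : Ideal R) :
    (I.map (algebraMap R T)).comap φ = I.map (algebraMap R E) ⊔ RingHom.ker φ := by
  rw [← φ.comp_algebraMap, ← Ideal.map_map]
  exact Ideal.comap_map_of_surjective' (φ : E →+* T) hφ _

lemma ker_quotientMap_eq_map_ker (hφ : Function.Surjective φ) (I : Ideal R)
    (h : I.map (algebraMap R E) ≤ (I.map (algebraMap R T)).comap (φ : E →+* T)) :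
    RingHom.ker (Ideal.quotientMap (I.map (algebraMap R T)) (φ : E →+* T) h) =
      (RingHom.ker φ).map (Ideal.Quotient.mk (I.map (algebraMap R E))) := by
  refine (Ideal.ker_quotient_lift _ _).trans ?_
  have hker : RingHom.ker ((Ideal.Quotient.mk (I.map (algebraMap R T))).comp (φ : E →+* T)) =
      I.map (algebraMap R E) ⊔ RingHom.ker φ := by
    rw [← comap_map_algebraMap_eq_sup_ker hφ, RingHom.ker_eq_comap_bot, ← Ideal.comap_comap,
      ← RingHom.ker_eq_comap_bot, Ideal.mk_ker]
    rfl
  rw [hker, Ideal.map_sup, Ideal.map_quotient_self, bot_sup_eq]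

lemma exists_list_map_mk_eq_of_forall_mem_map {I J : Ideal E} {l : List (E ⧸ I)}
    (hl : ∀ x ∈ l, x ∈ J.map (Ideal.Quotient.mk I)) :
    ∃ z : List E, Ideal.ofList z ≤ J ∧ z.map (Ideal.Quotient.mk I) = l := by
  have hlift : ∀ x ∈ l, ∃ y ∈ J, Ideal.Quotient.mk I y = x := fun x hx =>
    (Ideal.mem_map_iff_of_surjective _ Ideal.Quotient.mk_surjective).1 (hl x hx)
  choose! σ hσJ hσ using hlift
  refine ⟨l.map σ, Ideal.span_le.2 fun y hy => ?_, ?_⟩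
  · obtain ⟨x, hx, rfl⟩ := List.mem_map.1 hy
    exact hσJ x hx
  · exact List.map_map.trans ((List.map_congr_left hσ).trans l.map_id')

lemma le_ofList_of_map_mk_le [IsLocalRing E] [IsNoetherianRing E] {I J : Ideal E} {z : List E}
    (hI : I ≤ maximalIdeal E) (hz : Ideal.ofList z ≤ J) (hJI : J ⊓ I ≤ I * J)
    (hJz : J.map (Ideal.Quotient.mk I) ≤ Ideal.ofList (z.map (Ideal.Quotient.mk I))) :
    J ≤ Ideal.ofList z := by
  refine Submodule.le_of_le_smul_of_le_jacobson_bot (I := maximalIdeal E)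
    (IsNoetherian.noetherian _) (IsLocalRing.maximalIdeal_le_jacobson _) fun x hx => ?_
  rw [← Ideal.map_ofList] at hJz
  obtain ⟨y, hy, hyx⟩ := (Ideal.mem_map_iff_of_surjective _ Ideal.Quotient.mk_surjective).1
    (hJz (Ideal.mem_map_of_mem _ hx))
  have hxy : x - y ∈ J ⊓ I :=
    ⟨J.sub_mem hx (hz hy), (Ideal.Quotient.mk_eq_mk_iff_sub_mem _ _).1 hyx.symm⟩
  rw [← add_sub_cancel y x]
  exact Submodule.add_mem_sup hy (Ideal.mul_mono_left hI (hJI hxy))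

end KernelOfSurjection

section WeaklyRegularHom

lemma isWeaklyRegularHom_algebraMap_iff {R E : Type u} [CommRing R] [CommRing E] [IsLocalRing R]
    [Algebra R E] : IsWeaklyRegularHom R E (algebraMap R E) ↔ IsLocalHom (algebraMap R E) ∧
      Module.Flat R E ∧ IsRegularLocalRing (E ⧸ (maximalIdeal R).map (algebraMap R E)) :=
  and_congr_right' (and_congr RingHom.flat_algebraMap_iff isRegularLocal_iff_isRegularLocalRing)

variable {R E T : Type u} [CommRing R] [CommRing E] [CommRing T] [IsLocalRing R] [IsLocalRing E]
  [IsNoetherianRing R] [IsNoetherianRing E] [Algebra R E] [Algebra R T] {φ : E →ₐ[R] T}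

/- Modulo the maximal ideal of `R` this is the corresponding fact for regular local rings;
flatness of `T` and Nakayama's lemma lift generators of the kernel, and flatness of `E` lifts
their regularity. -/
lemma generatedByRegularSequence_ker_of_isWeaklyRegularHom
    (hE : IsWeaklyRegularHom R E (algebraMap R E)) (hT : IsWeaklyRegularHom R T (algebraMap R T))
    (hφ : Function.Surjective φ) : GeneratedByRegularSequence E (RingHom.ker φ) := by
  obtain ⟨_, _, _⟩ := isWeaklyRegularHom_algebraMap_iff.1 hE
  obtain ⟨_, _, _⟩ := isWeaklyRegularHom_algebraMap_iff.1 hT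
  have hcomap : (maximalIdeal R).map (algebraMap R E) ≤
      ((maximalIdeal R).map (algebraMap R T)).comap (φ : E →+* T) :=
    (comap_map_algebraMap_eq_sup_ker hφ (maximalIdeal R)).ge.trans' le_sup_left
  obtain ⟨t, ht, htker⟩ := generatedByRegularSequence_ker_of_isRegularLocalRing
    (Ideal.quotientMap_surjective (H := hcomap) hφ)
  rw [ker_quotientMap_eq_map_ker hφ] at htker
  obtain ⟨z, hz, rfl⟩ := exists_list_map_mk_eq_of_forall_mem_map
    fun x hx => htker.le (Ideal.subset_span hx)
  have hker : Ideal.ofList z = RingHom.ker φ := hz.antisymm <|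
    le_ofList_of_map_mk_le (((local_hom_TFAE (algebraMap R E)).out 0 2).1 ‹_›) hz
      (ker_inf_map_le_map_mul_ker hφ _) htker.ge
  have : Nontrivial T :=
    (Ideal.Quotient.mk ((maximalIdeal R).map (algebraMap R T))).domain_nontrivial
  refine ⟨z, isRegular_iff_isWeaklyRegular_and_ne_top.2 ⟨?_, hker ▸ RingHom.ker_ne_top _⟩, hker⟩
  refine isWeaklyRegular_of_isWeaklyRegular_fibre (R := R) ?_
  have hfib := isWeaklyRegular_quotient_ker_iff (Ideal.Quotient.mk_surjective
    (I := (maximalIdeal R).map (algebraMap R E))) z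
  rw [Ideal.mk_ker] at hfib
  exact hfib.2 ht.toIsWeaklyRegular

end WeaklyRegularHom

section LocalizedPolynomialRing

lemma ker_localRingHom_comap {B C : Type*} [CommRing B] [CommRing C] {f : B →+* C}
    (hf : Function.Surjective f) (q : Ideal C) [q.IsPrime] :
    RingHom.ker (Localization.localRingHom (q.comap f) q f rfl) =
      (RingHom.ker f).map (algebraMap B (Localization.AtPrime (q.comap f))) := by
  refine IsLocalization.ker_map (M := (q.comap f).primeCompl) (T := q.primeCompl) _ f ?_
  exact Submonoid.map_comap_eq_of_surjective hf q.primeCompl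

variable {R ι : Type u} [CommRing R] [IsLocalRing R] {p : Ideal (MvPolynomial ι R)} [p.IsPrime]

lemma isLocalHom_algebraMap_localizationAtPrime_mvPolynomial
    (hp : p.comap MvPolynomial.C = maximalIdeal R) :
    IsLocalHom (algebraMap R (Localization.AtPrime p)) := by
  refine ⟨fun r hr => of_not_not fun hru => ?_⟩
  rw [IsScalarTower.algebraMap_apply R (MvPolynomial ι R),
    IsLocalization.AtPrime.isUnit_to_map_iff _ p] at hr
  rw [← mem_nonunits_iff, ← mem_maximalIdeal, ← hp] at hru
  exact hr hru

/- The fibre is the localization of `k[ι]` at the image of `p`, where `k` is the residue field. -/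
lemma isRegularLocalRing_fibre_localizationAtPrime_mvPolynomial [Finite ι]
    (hp : maximalIdeal R ≤ p.comap MvPolynomial.C) :
    IsRegularLocalRing (Localization.AtPrime p ⧸
      (maximalIdeal R).map (algebraMap R (Localization.AtPrime p))) := by
  let f : MvPolynomial ι R →+* MvPolynomial ι (ResidueField R) := MvPolynomial.map (residue R)
  have hf : Function.Surjective f := MvPolynomial.map_surjective _ residue_surjective
  have hker : RingHom.ker f = (maximalIdeal R).map MvPolynomial.C := by
    rw [MvPolynomial.ker_map, IsLocalRing.ker_residue]
  have hkerp : RingHom.ker f ≤ p := hker ▸ Ideal.map_le_iff_le_comap.2 hp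
  have hq : (p.map f).IsPrime := Ideal.map_isPrime_of_surjective hf hkerp
  obtain ⟨q, _, rfl⟩ : ∃ q : Ideal (MvPolynomial ι (ResidueField R)), ∃ _ : q.IsPrime,
      p = q.comap f :=
    ⟨p.map f, hq, by rw [Ideal.comap_map_of_surjective' f hf, sup_eq_left.2 hkerp]⟩
  have hfib : (maximalIdeal R).map (algebraMap R (Localization.AtPrime (q.comap f))) =
      RingHom.ker (Localization.localRingHom (q.comap f) q f rfl) := by
    rw [ker_localRingHom_comap hf, hker, Ideal.map_map]
    rfl
  exact .of_ringEquiv ((Ideal.quotEquivOfEq hfib).trans (RingHom.quotientKerEquivOfSurjective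
    (RingHom.surjective_localRingHom_of_surjective f hf q))).symm

lemma isWeaklyRegularHom_localizationAtPrime_mvPolynomial [Finite ι]
    (hp : p.comap MvPolynomial.C = maximalIdeal R) :
    IsWeaklyRegularHom R (Localization.AtPrime p) (algebraMap R (Localization.AtPrime p)) :=
  isWeaklyRegularHom_algebraMap_iff.2
    ⟨isLocalHom_algebraMap_localizationAtPrime_mvPolynomial hp,
      .trans R (MvPolynomial ι R) (Localization.AtPrime p),
      isRegularLocalRing_fibre_localizationAtPrime_mvPolynomial hp.ge⟩

end LocalizedPolynomialRing

section NoetherianCompletion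

lemma map_aeval_pow_idealOfVars {σ A B : Type*} [CommRing A] [CommRing B] [Algebra A B]
    (b : σ → B) (n : ℕ) :
    (MvPolynomial.idealOfVars σ A ^ n).map (MvPolynomial.aeval (R := A) b) =
      Ideal.span (Set.range b) ^ n := by
  rw [Ideal.map_pow, MvPolynomial.idealOfVars, Ideal.map_span, ← Set.range_comp]
  simp only [Function.comp_def, MvPolynomial.aeval_X]

variable {σ A B : Type*} [Finite σ] [CommRing A] [CommRing B] [Algebra A B] (b : σ → B)

/-- Evaluation of power series at a finite family `b`, modulo the `n`-th power of the ideal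
generated by `b`. -/
noncomputable def mvPowerSeriesAevalModPow (n : ℕ) :
    MvPowerSeries σ A →ₐ[A] B ⧸ Ideal.span (Set.range b) ^ n :=
  (Ideal.quotientMapₐ (I := MvPolynomial.idealOfVars σ A ^ n) _ (MvPolynomial.aeval (R := A) b)
    (Ideal.map_le_iff_le_comap.1 (map_aeval_pow_idealOfVars b n).le)).comp
      ((MvPowerSeries.truncTotalAlgHom σ A n).restrictScalars A)

lemma factorₐ_comp_mvPowerSeriesAevalModPow {m n : ℕ} (hmn : m ≤ n) :
    (Ideal.Quotient.factorₐ A (Ideal.pow_le_pow_right hmn)).comp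
      (mvPowerSeriesAevalModPow b n) = mvPowerSeriesAevalModPow (A := A) b m := by
  refine AlgHom.ext fun p => Ideal.Quotient.eq.2 ?_
  have h := Ideal.mem_map_of_mem (MvPolynomial.aeval (R := A) b)
    (MvPowerSeries.truncTotal_sub_truncTotal_mem_pow_idealOfVars hmn le_rfl p)
  rwa [map_aeval_pow_idealOfVars, map_sub] at h

lemma mvPowerSeriesAevalModPow_coe (n : ℕ) (p : MvPolynomial σ A) :
    mvPowerSeriesAevalModPow b n (p : MvPowerSeries σ A) =
      Ideal.Quotient.mk _ (p.aeval b) := by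
  rw [mvPowerSeriesAevalModPow, AlgHom.comp_apply, AlgHom.restrictScalars_apply,
    show MvPowerSeries.truncTotalAlgHom σ A n p = Ideal.Quotient.mk _ p from
      (MvPowerSeries.truncTotalAlgHom σ A n).commutes p]
  rfl

/-- Evaluation of power series at a finite family `b` in an `A`-algebra `B` that is adically
complete with respect to the ideal generated by `b`. -/
noncomputable def mvPowerSeriesAeval [IsAdicComplete (Ideal.span (Set.range b)) B] :
    MvPowerSeries σ A →ₐ[A] B :=
  IsAdicComplete.liftAlgHom _ (mvPowerSeriesAevalModPow b)
    (factorₐ_comp_mvPowerSeriesAevalModPow b)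

lemma mvPowerSeriesAeval_coe [IsAdicComplete (Ideal.span (Set.range b)) B]
    (p : MvPolynomial σ A) : mvPowerSeriesAeval b (p : MvPowerSeries σ A) = p.aeval b := by
  refine (IsHausdorff.eq_iff_smodEq (I := Ideal.span (Set.range b))).2 fun n => ?_
  rw [SModEq.sub_mem, smul_eq_mul, Ideal.mul_top, ← Ideal.Quotient.eq, mvPowerSeriesAeval,
    IsAdicComplete.mk_liftAlgHom, mvPowerSeriesAevalModPow_coe]

/- With `J` generated by `b₁, …, bᵣ`, evaluation at `b` makes `B` a quotient of `A⟦X₁, …, Xᵣ⟧`. -/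
theorem isNoetherianRing_of_isAdicComplete_of_surjective {A B : Type*} [CommRing A] [CommRing B]
    [Algebra A B] [IsNoetherianRing A] {J : Ideal B} [IsAdicComplete J B] (hJ : J.FG)
    (h : Function.Surjective ((Ideal.Quotient.mk J).comp (algebraMap A B))) :
    IsNoetherianRing B := by
  obtain ⟨r, b, rfl⟩ := Submodule.fg_iff_exists_fin_generating_family.1 hJ
  let f : MvPowerSeries (Fin r) A →ₐ[A] B := mvPowerSeriesAeval b
  have hf : (Ideal.span (Set.range MvPowerSeries.X)).map (f : MvPowerSeries (Fin r) A →+* B) =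
      Ideal.span (Set.range b) := by
    rw [Ideal.map_span, ← Set.range_comp]
    congr 2
    ext i
    simp [f, ← MvPolynomial.coe_X, mvPowerSeriesAeval_coe]
  have hH : IsHausdorff ((Ideal.span (Set.range MvPowerSeries.X)).map
      (f : MvPowerSeries (Fin r) A →+* B)) B := by
    rw [hf]; infer_instance
  refine isNoetherianRing_of_surjective _ _ (f : MvPowerSeries (Fin r) A →+* B)
    (surjective_of_mk_map_comp_surjective (I := Ideal.span (Set.range MvPowerSeries.X)) _ ?_)
  rw [hf]
  exact fun y => (h y).imp' (algebraMap A _) fun a ha => by simpa using ha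

instance isNoetherianRing_adicCompletion {A : Type*} [CommRing A] [IsNoetherianRing A]
    (I : Ideal A) : IsNoetherianRing (AdicCompletion I A) := by
  have := AdicCompletion.isAdicComplete_self I I.fg_of_isNoetherianRing
  refine isNoetherianRing_of_isAdicComplete_of_surjective (A := A)
    (I.fg_of_isNoetherianRing.map (algebraMap A (AdicCompletion I A))) fun y => ?_
  obtain ⟨y, rfl⟩ := Ideal.Quotient.mk_surjective y
  obtain ⟨a, ha⟩ := Ideal.Quotient.mk_surjective (AdicCompletion.evalOneₐ I y)
  refine ⟨a, Ideal.Quotient.eq.2 ?_⟩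
  rw [← AdicCompletion.ker_evalOneₐ_eq_map I I.fg_of_isNoetherianRing, RingHom.sub_mem_ker_iff]
  exact ha

end NoetherianCompletion

section FaithfullyFlatDescent

variable {A E : Type u} [CommRing A] [CommRing E] [Algebra A E]

lemma isWeaklyRegular_of_isWeaklyRegular_map_algebraMap [Module.FaithfullyFlat A E] {l : List A}
    (h : IsWeaklyRegular E (l.map (algebraMap A E))) : IsWeaklyRegular A l := by
  rw [← (Submodule.quotEquivOfEqBot (⊥ : Ideal _) rfl).isWeaklyRegular_congr,
    isWeaklyRegular_quotient_iff_forall_mem] at h ⊢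
  intro i hi e he
  specialize h i (by simpa using hi) (algebraMap A E e)
  simp only [sup_bot_eq, List.getElem_map, ← map_mul, ← List.map_take, ← Ideal.map_ofList] at h he ⊢
  have hmem := h (Ideal.mem_map_of_mem _ he)
  rwa [← Ideal.mem_comap, Ideal.comap_map_eq_self_of_faithfullyFlat] at hmem

lemma isWeaklyRegular_quotient_map_of_flat [Module.Flat A E] {I : Ideal A} {l : List A}
    (h : IsWeaklyRegular (A ⧸ I) l) :
    IsWeaklyRegular (E ⧸ I.map (algebraMap A E)) (l.map (algebraMap A E)) :=
  ((Ideal.qoutMapEquivTensorQout E).isWeaklyRegular_congr _).2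
    (h.of_flat_of_isBaseChange (TensorProduct.isBaseChange A (A ⧸ I) E))

variable [IsLocalRing E] (hres : Function.Surjective ((residue E).comp (algebraMap A E)))
include hres

lemma exists_mem_sub_mem_maximalIdeal_mul_map {J : Ideal A} {w : E}
    (hw : w ∈ J.map (algebraMap A E)) :
    ∃ a ∈ J, algebraMap A E a - w ∈ maximalIdeal E * J.map (algebraMap A E) := by
  refine Submodule.span_induction ?_ ⟨0, J.zero_mem, by simp⟩ ?_ ?_ hw
  · rintro _ ⟨a, ha, rfl⟩
    exact ⟨a, ha, by simp⟩
  · rintro x y _ _ ⟨a, ha, hax⟩ ⟨b, hb, hby⟩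
    refine ⟨a + b, J.add_mem ha hb, ?_⟩
    rw [map_add, add_sub_add_comm]
    exact add_mem hax hby
  · rintro e x - ⟨a, ha, hax⟩
    obtain ⟨c, hc⟩ := hres (residue E e)
    have hce : algebraMap A E c - e ∈ maximalIdeal E := Ideal.Quotient.eq.1 hc
    refine ⟨c * a, J.mul_mem_left _ ha, ?_⟩
    rw [map_mul, smul_eq_mul, show algebraMap A E c * algebraMap A E a - e * x =
      (algebraMap A E c - e) * algebraMap A E a + e * (algebraMap A E a - x) by ring]
    exact add_mem (Ideal.mul_mem_mul hce (Ideal.mem_map_of_mem _ ha)) (Ideal.mul_mem_left _ e hax)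

lemma exists_sub_mem_maximalIdeal_pow {I : Ideal A}
    (hI : I.map (algebraMap A E) = maximalIdeal E) (k : ℕ) (e : E) :
    ∃ a : A, algebraMap A E a - e ∈ maximalIdeal E ^ k := by
  induction k with
  | zero => exact ⟨0, by simp⟩
  | succ k ih =>
    obtain ⟨a, ha⟩ := ih
    have hk : (I ^ k).map (algebraMap A E) = maximalIdeal E ^ k := by rw [Ideal.map_pow, hI]
    obtain ⟨b, -, hb⟩ := exists_mem_sub_mem_maximalIdeal_mul_map hres (hk ▸ ha)
    refine ⟨a - b, ?_⟩
    rw [hk, ← pow_succ'] at hb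
    rw [map_sub, sub_right_comm, ← neg_sub (algebraMap A E b)]
    exact neg_mem hb

/- Generators of `J E` may be changed modulo `m_E J E`, hence chosen in the image of `J`. -/
theorem generatedByRegularSequence_of_map_algebraMap [IsNoetherianRing E]
    [Module.FaithfullyFlat A E] {J : Ideal A}
    (h : GeneratedByRegularSequence E (J.map (algebraMap A E))) :
    GeneratedByRegularSequence A J := by
  obtain ⟨w, hw, hwJ⟩ := h
  change Ideal.ofList w = _ at hwJ
  have happrox (x : E) : ∃ a, x ∈ w → a ∈ J ∧
      algebraMap A E a - x ∈ maximalIdeal E * J.map (algebraMap A E) := by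
    by_cases hx : x ∈ w
    · obtain ⟨a, ha⟩ := exists_mem_sub_mem_maximalIdeal_mul_map hres
        (hwJ ▸ Ideal.subset_span hx : x ∈ J.map (algebraMap A E))
      exact ⟨a, fun _ => ha⟩
    · exact ⟨0, fun h => absurd h hx⟩
  choose a ha using happrox
  obtain ⟨hreg, hspan⟩ := isRegular_map_of_sub_mem (σ := fun x => algebraMap A E (a x)) hw
    fun x hx => hwJ ▸ (ha x hx).2
  rw [show (fun x => algebraMap A E (a x)) = algebraMap A E ∘ a from rfl, ← List.map_map]
    at hreg hspan
  have hJ : Ideal.ofList (w.map a) = J := by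
    rw [← Ideal.comap_map_eq_self_of_faithfullyFlat (B := E) (Ideal.ofList (w.map a)),
      Ideal.map_ofList, hspan, hwJ, Ideal.comap_map_eq_self_of_faithfullyFlat]
  rw [isRegular_iff_isWeaklyRegular_and_ne_top] at hreg
  refine ⟨w.map a, isRegular_iff_isWeaklyRegular_and_ne_top.2
    ⟨isWeaklyRegular_of_isWeaklyRegular_map_algebraMap hreg.1, fun htop => hreg.2 ?_⟩, hJ⟩
  rw [← Ideal.map_ofList, htop, Ideal.map_top]

/- An element of the kernel is, modulo any power of the maximal ideal of `E`, congruent to an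
element of `A` that dies in `S`. -/
lemma ker_eq_map_ker_of_faithfullyFlat {S B : Type u} [CommRing S] [CommRing B] [Algebra A S]
    [Algebra S B] [Algebra A B] [IsScalarTower A S B] [Module.FaithfullyFlat S B]
    [IsNoetherianRing E] {I : Ideal A} (hI : I.map (algebraMap A E) = maximalIdeal E)
    (hS : Function.Surjective (algebraMap A S)) (ψ : E →ₐ[A] B) :
    RingHom.ker ψ = (RingHom.ker (algebraMap A S)).map (algebraMap A E) := by
  refine le_antisymm (fun x hx => mem_of_forall_mem_sup_maximalIdeal_pow fun k => ?_) ?_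
  · obtain ⟨a, ha⟩ := exists_sub_mem_maximalIdeal_pow hres hI k x
    have hψa : algebraMap S B (algebraMap A S a) ∈
        ((I ^ k).map (algebraMap A S)).map (algebraMap S B) := by
      rw [Ideal.map_map, ← IsScalarTower.algebraMap_eq, ← ψ.comp_algebraMap, ← Ideal.map_map,
        Ideal.map_pow (algebraMap A E), hI, ← IsScalarTower.algebraMap_apply]
      simpa [RingHom.mem_ker.1 hx] using Ideal.mem_map_of_mem (ψ : E →+* B) ha
    rw [← Ideal.mem_comap, Ideal.comap_map_eq_self_of_faithfullyFlat,
      Ideal.mem_map_iff_of_surjective _ hS] at hψa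
    obtain ⟨b, hb, hba⟩ := hψa
    rw [show x = algebraMap A E (a - b) + (algebraMap A E b - (algebraMap A E a - x)) by
      rw [map_sub]; ring]
    refine Submodule.add_mem_sup (Ideal.mem_map_of_mem _ ?_) (sub_mem ?_ ha)
    · rw [RingHom.sub_mem_ker_iff, hba]
    · rw [← hI, ← Ideal.map_pow]
      exact Ideal.mem_map_of_mem _ hb
  · refine Ideal.map_le_iff_le_comap.2 fun a ha => ?_
    rw [Ideal.mem_comap, RingHom.mem_ker, ψ.commutes, IsScalarTower.algebraMap_apply A S,
      RingHom.mem_ker.1 ha, map_zero]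

end FaithfullyFlatDescent

section Completion

lemma isRegularLocalRing_quotient_of_ofList_sup_eq_maximalIdeal {A : Type u} [CommRing A]
    [IsLocalRing A] [IsNoetherianRing A] {I : Ideal A} {l : List A}
    (hl : IsWeaklyRegular (A ⧸ I) l) (h : Ideal.ofList l ⊔ I = maximalIdeal A) :
    IsRegularLocalRing (A ⧸ I) := by
  have hI : I ≠ ⊤ := ne_top_of_le_ne_top (maximalIdeal.isMaximal A).ne_top (h ▸ le_sup_right)
  have : Nontrivial (A ⧸ I) := Ideal.Quotient.nontrivial_iff.2 hI
  have := IsLocalRing.of_surjective' _ (Ideal.Quotient.mk_surjective (I := I))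
  have hmax : Ideal.ofList (l.map (Ideal.Quotient.mk I)) = maximalIdeal (A ⧸ I) := by
    rw [← map_maximalIdeal_of_surjective _ (Ideal.Quotient.mk_surjective (I := I)), ← h,
      Ideal.map_sup, Ideal.map_quotient_self, sup_bot_eq, Ideal.map_ofList]
  refine isRegularLocalRing_of_ofList_eq_maximalIdeal
    (isRegular_iff_isWeaklyRegular_and_ne_top.2 ⟨?_, ?_⟩) hmax
  · rw [← isWeaklyRegular_quotient_ker_iff Ideal.Quotient.mk_surjective, Ideal.mk_ker]
    exact hl
  · rw [hmax]
    exact (maximalIdeal.isMaximal _).ne_top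

lemma exists_ofList_sup_eq_maximalIdeal_of_isRegularLocalRing {A : Type u} [CommRing A]
    [IsLocalRing A] {I : Ideal A} [IsRegularLocalRing (A ⧸ I)] :
    ∃ l, IsWeaklyRegular (A ⧸ I) l ∧ Ideal.ofList l ⊔ I = maximalIdeal A := by
  obtain ⟨-, _, l, hl, hmax⟩ :=
    isRegularLocal_iff_isRegularLocalRing.2 ‹IsRegularLocalRing (A ⧸ I)›
  obtain ⟨l, rfl⟩ := List.map_surjective_iff.2 (Ideal.Quotient.mk_surjective (I := I)) l
  change Ideal.ofList _ = _ at hmax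
  rw [← Ideal.map_ofList] at hmax
  refine ⟨l, ?_, ?_⟩
  · have := (isWeaklyRegular_quotient_ker_iff (Ideal.Quotient.mk_surjective (I := I)) l).2
      hl.toIsWeaklyRegular
    rwa [Ideal.mk_ker] at this
  · rw [← eq_maximalIdeal (Ideal.comap_isMaximal_of_surjective (Ideal.Quotient.mk I)
      Ideal.Quotient.mk_surjective (K := maximalIdeal _)), ← hmax,
      Ideal.comap_map_of_surjective' _ Ideal.Quotient.mk_surjective, Ideal.mk_ker]

variable {A T : Type u} [CommRing A] [CommRing T] [Algebra A T] [IsLocalRing A] [IsLocalRing T]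

lemma isWeaklyRegularHom_of_flat_of_map_maximalIdeal_eq {R : Type u} [CommRing R] [IsLocalRing R]
    [Algebra R A] [Algebra R T] [IsScalarTower R A T] [IsNoetherianRing T] [Module.Flat A T]
    (hA : IsWeaklyRegularHom R A (algebraMap R A))
    (hm : (maximalIdeal A).map (algebraMap A T) = maximalIdeal T) :
    IsWeaklyRegularHom R T (algebraMap R T) := by
  obtain ⟨_, _, _⟩ := isWeaklyRegularHom_algebraMap_iff.1 hA
  have : IsLocalHom (algebraMap A T) := ((local_hom_TFAE _).out 0 2).2 hm.le
  refine isWeaklyRegularHom_algebraMap_iff.2 ⟨?_, .trans R A T, ?_⟩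
  · rw [IsScalarTower.algebraMap_eq R A T]
    infer_instance
  · obtain ⟨l, hl, hmax⟩ := exists_ofList_sup_eq_maximalIdeal_of_isRegularLocalRing
      (I := (maximalIdeal R).map (algebraMap R A))
    rw [IsScalarTower.algebraMap_eq R A T, ← Ideal.map_map]
    exact isRegularLocalRing_quotient_of_ofList_sup_eq_maximalIdeal
      (isWeaklyRegular_quotient_map_of_flat hl)
      (by rw [← Ideal.map_ofList, ← Ideal.map_sup, hmax, hm])

variable [IsLocalHom (algebraMap A T)]

variable (A T) in
/-- The map from the completion of a local ring `A` to the quotient of a local `A`-algebra `T` by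
the `n`-th power of its maximal ideal. -/
noncomputable def adicCompletionToQuotientPow (n : ℕ) :
    AdicCompletion (maximalIdeal A) A →ₐ[A] T ⧸ maximalIdeal T ^ n :=
  (Ideal.quotientMapₐ (I := maximalIdeal A ^ n) _ (Algebra.ofId A T) <|
    Ideal.map_le_iff_le_comap.1 <| (Ideal.map_pow (algebraMap A T) _ n).trans_le <|
      Ideal.pow_right_mono (((local_hom_TFAE (algebraMap A T)).out 0 2).1 ‹_›) n).comp
    (AdicCompletion.evalₐ (maximalIdeal A) n)

lemma factorₐ_comp_adicCompletionToQuotientPow {m n : ℕ} (hmn : m ≤ n) :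
    (Ideal.Quotient.factorₐ A (Ideal.pow_le_pow_right hmn)).comp
      (adicCompletionToQuotientPow A T n) = adicCompletionToQuotientPow A T m := by
  refine AlgHom.ext fun x => ?_
  obtain ⟨x, rfl⟩ := AdicCompletion.mk_surjective _ _ x
  have h := Ideal.mem_map_of_mem (algebraMap A T) (SModEq.sub_mem.1 (x.2 hmn).symm)
  rw [smul_eq_mul, Ideal.mul_top, Ideal.map_pow, map_sub] at h
  simp only [adicCompletionToQuotientPow, AlgHom.comp_apply, AdicCompletion.evalₐ_mk]
  exact Ideal.Quotient.eq.2 (Ideal.pow_right_mono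
    (((local_hom_TFAE (algebraMap A T)).out 0 2).1 ‹_›) m h)

variable (A T) in
/-- The canonical map from the completion of a local ring `A` to a complete local `A`-algebra. -/
noncomputable def adicCompletionLift [IsAdicComplete (maximalIdeal T) T] :
    AdicCompletion (maximalIdeal A) A →ₐ[A] T :=
  IsAdicComplete.liftAlgHom _ (adicCompletionToQuotientPow A T)
    factorₐ_comp_adicCompletionToQuotientPow

variable [IsNoetherianRing A]

lemma adicCompletionLift_surjective [IsAdicComplete (maximalIdeal T) T]
    (hm : (maximalIdeal A).map (algebraMap A T) = maximalIdeal T)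
    (hres : Function.Surjective ((residue T).comp (algebraMap A T))) :
    Function.Surjective (adicCompletionLift A T) := by
  have hmap : (maximalIdeal (AdicCompletion (maximalIdeal A) A)).map
      (adicCompletionLift A T : AdicCompletion (maximalIdeal A) A →+* T) = maximalIdeal T := by
    rw [AdicCompletion.maximalIdeal_eq_map, Ideal.map_map, AlgHom.comp_algebraMap, hm]
  have : IsHausdorff ((maximalIdeal (AdicCompletion (maximalIdeal A) A)).map
      (adicCompletionLift A T : AdicCompletion (maximalIdeal A) A →+* T)) T := by
    rw [hmap]; infer_instance
  refine surjective_of_mk_map_comp_surjective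
    (I := maximalIdeal (AdicCompletion (maximalIdeal A) A))
    (adicCompletionLift A T : AdicCompletion (maximalIdeal A) A →+* T) ?_
  rw [hmap]
  exact fun y => (hres y).imp' (algebraMap A _) fun a ha =>
    (congrArg (Ideal.Quotient.mk _) ((adicCompletionLift A T).commutes a)).trans ha

variable (A) in
lemma residue_comp_algebraMap_adicCompletion_surjective :
    Function.Surjective ((residue (AdicCompletion (maximalIdeal A) A)).comp
      (algebraMap A (AdicCompletion (maximalIdeal A) A))) :=
  (AdicCompletion.residueField_map_bijective A).surjective.comp residue_surjective

/- Both `R → Â` and `R → T` are weakly regular and `Â → T` is surjective, so the kernel of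
`Â → T → B` is generated by a regular sequence, and this property descends to `A`. -/
theorem generatedByRegularSequence_ker_of_isWeaklyRegularHom_of_isAdicComplete
    {R S B : Type u} [CommRing R] [CommRing S] [CommRing B] [IsLocalRing R] [IsNoetherianRing R]
    [IsAdicComplete (maximalIdeal T) T]
    [Algebra R A] [Algebra R T] [IsScalarTower R A T]
    [Algebra A S] [Algebra S B] [Algebra A B] [IsScalarTower A S B] [Module.FaithfullyFlat S B]
    (hA : IsWeaklyRegularHom R A (algebraMap R A)) (hT : IsWeaklyRegularHom R T (algebraMap R T))
    (hm : (maximalIdeal A).map (algebraMap A T) = maximalIdeal T)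
    (hres : Function.Surjective ((residue T).comp (algebraMap A T)))
    (hS : Function.Surjective (algebraMap A S)) {g : T →ₐ[A] B}
    (hg : GeneratedByRegularSequence T (RingHom.ker g)) :
    GeneratedByRegularSequence A (RingHom.ker (algebraMap A S)) := by
  have := AdicCompletion.flat_of_isNoetherian (maximalIdeal A)
  have : Module.FaithfullyFlat A (AdicCompletion (maximalIdeal A) A) := .of_flat_of_isLocalHom
  have hmax := (AdicCompletion.maximalIdeal_eq_map (R := A)).symm
  have hker := generatedByRegularSequence_ker_of_isWeaklyRegularHom
    (φ := (adicCompletionLift A T).restrictScalars R)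
    (isWeaklyRegularHom_of_flat_of_map_maximalIdeal_eq hA hmax) hT
    (adicCompletionLift_surjective hm hres)
  refine generatedByRegularSequence_of_map_algebraMap
    (residue_comp_algebraMap_adicCompletion_surjective A) ?_
  rw [← ker_eq_map_ker_of_faithfullyFlat (residue_comp_algebraMap_adicCompletion_surjective A)
    hmax hS (g.comp (adicCompletionLift A T))]
  exact generatedByRegularSequence_ker_comp (adicCompletionLift_surjective hm hres) hker hg

end Completion

section LocalizedEvaluation

variable {R ι T : Type u} [CommRing R] [CommRing T] [Algebra R T] [IsLocalRing T]
  {p : Ideal (MvPolynomial ι R)} [p.IsPrime]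

/-- The evaluation at a family `y` in a local `R`-algebra `T`, extended to the localization of the
polynomial ring at the preimage `p` of the maximal ideal of `T`. -/
noncomputable def localizedAeval (y : ι → T)
    (hp : (maximalIdeal T).comap (MvPolynomial.aeval (R := R) y) = p) :
    Localization.AtPrime p →ₐ[R] T :=
  IsLocalization.liftAlgHom (M := p.primeCompl) (f := MvPolynomial.aeval y) fun b =>
    notMem_maximalIdeal.1 fun h => b.2 (hp ▸ h)

variable {y : ι → T} (hp : (maximalIdeal T).comap (MvPolynomial.aeval (R := R) y) = p)

lemma localizedAeval_algebraMap (b : MvPolynomial ι R) :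
    localizedAeval y hp (algebraMap _ _ b) = b.aeval y :=
  IsLocalization.lift_eq _ b

lemma isLocalHom_localizedAeval : IsLocalHom (localizedAeval y hp).toRingHom := by
  refine ((local_hom_TFAE _).out 0 2).2 ?_
  rw [← Localization.AtPrime.map_eq_maximalIdeal, Ideal.map_map, Ideal.map_le_iff_le_comap]
  intro b hb
  rw [← hp] at hb
  exact (congrArg (· ∈ maximalIdeal T) (localizedAeval_algebraMap hp b)).mpr hb

omit [p.IsPrime] in
lemma comap_C_eq_maximalIdeal [IsLocalRing R] [IsLocalHom (algebraMap R T)]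
    (hp : (maximalIdeal T).comap (MvPolynomial.aeval (R := R) y) = p) :
    p.comap MvPolynomial.C = maximalIdeal R := by
  ext r
  rw [← hp, ← maximalIdeal_comap (algebraMap R T), Ideal.mem_comap, Ideal.mem_comap,
    MvPolynomial.aeval_C, Ideal.mem_comap]

lemma localizedAeval_surjective [Algebra.EssFiniteType R T]
    (hy : ∀ t ∈ Algebra.EssFiniteType.finset R T, t ∈ Set.range y) :
    Function.Surjective (localizedAeval y hp) := by
  have hadj : Algebra.EssFiniteType.subalgebra R T ≤ (MvPolynomial.aeval (R := R) y).range := by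
    rw [← Algebra.adjoin_range_eq_range_aeval]
    exact Algebra.adjoin_mono hy
  intro t
  have := Algebra.EssFiniteType.isLocalization R T
  obtain ⟨⟨a, s⟩, hs⟩ := IsLocalization.surj (Algebra.EssFiniteType.submonoid R T) t
  obtain ⟨b, hb⟩ := hadj a.2
  obtain ⟨c, hc⟩ := hadj s.1.2
  have hsu : IsUnit (s.1 : T) := s.2
  have hcp : c ∈ p.primeCompl := fun h => by
    rw [← hp] at h
    exact notMem_maximalIdeal.2 (hc ▸ hsu) h
  refine ⟨IsLocalization.mk' _ b ⟨c, hcp⟩, hsu.mul_right_cancel (Eq.trans ?_ hs.symm)⟩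
  have h := congrArg (localizedAeval y hp) (IsLocalization.mk'_spec _ b ⟨c, hcp⟩)
  rw [map_mul, localizedAeval_algebraMap, localizedAeval_algebraMap] at h
  exact (congrArg _ hc.symm).trans (h.trans hb)

end LocalizedEvaluation

section AlgHomOfSurjective

variable {A S T B : Type*} [CommRing A] [CommRing S] [CommRing T] [CommRing B]
  [IsLocalRing T] [IsLocalRing B] [Algebra A S]
  [Algebra A T] [Algebra A B] [Algebra S B] [IsScalarTower A S B] {g : T →ₐ[A] B}
  [IsLocalHom (g : T →+* B)] (hS : Function.Surjective (algebraMap A S))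
include hS

lemma map_maximalIdeal_eq_of_ker_le [IsLocalRing A] [IsLocalRing S]
    (hg : Function.Surjective g)
    (hB : (maximalIdeal S).map (algebraMap S B) = maximalIdeal B)
    (hker : RingHom.ker g ≤ (maximalIdeal A).map (algebraMap A T)) :
    (maximalIdeal A).map (algebraMap A T) = maximalIdeal T := by
  have hmap : ((maximalIdeal A).map (algebraMap A T)).map (g : T →+* B) = maximalIdeal B := by
    rw [Ideal.map_map, g.comp_algebraMap, IsScalarTower.algebraMap_eq A S B, ← Ideal.map_map,
      map_maximalIdeal_of_surjective _ hS, hB]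
  rw [← maximalIdeal_comap (g : T →+* B), ← hmap,
    Ideal.comap_map_of_surjective' (g : T →+* B) hg]
  exact (sup_eq_left.2 hker).symm

include g in
lemma residue_comp_algebraMap_surjective_of_algHom
    (hB : Function.Surjective ((residue B).comp (algebraMap S B))) :
    Function.Surjective ((residue T).comp (algebraMap A T)) := by
  intro z
  obtain ⟨z, rfl⟩ := residue_surjective z
  obtain ⟨s, hs⟩ := hB (residue B (g z))
  obtain ⟨a, rfl⟩ := hS s
  refine ⟨a, Ideal.Quotient.eq.2 ?_⟩
  rw [← maximalIdeal_comap (g : T →+* B), Ideal.mem_comap, map_sub]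
  rw [RingHom.comp_apply, ← IsScalarTower.algebraMap_apply, ← g.commutes] at hs
  exact Ideal.Quotient.eq.1 hs

end AlgHomOfSurjective

section CohenFactorization

variable {R S T B ι : Type u} [CommRing R] [CommRing S] [CommRing T] [CommRing B]
  [IsLocalRing S] [IsLocalRing T] [IsLocalRing B] [Algebra R S] [Algebra R T] [Algebra R B]
  [Algebra S B] [IsScalarTower R S B] [IsLocalHom (algebraMap S B)]
  {g : T →ₐ[R] B} [IsLocalHom (g : T →+* B)] {x : ι → S} {y : ι → T}
  (hxy : g ∘ y = algebraMap S B ∘ x)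
include hxy

omit [IsLocalRing S] [IsLocalRing T] [IsLocalRing B] [IsLocalHom (algebraMap S B)]
  [IsLocalHom (g : T →+* B)] in
lemma map_aeval_eq_algebraMap_aeval (b : MvPolynomial ι R) :
    g (b.aeval y) = algebraMap S B (b.aeval x) := by
  rw [MvPolynomial.comp_aeval_apply, ← MvPolynomial.aeval_algebraMap_apply]
  exact congrArg (MvPolynomial.aeval · b) hxy

lemma comap_maximalIdeal_aeval_eq : (maximalIdeal T).comap (MvPolynomial.aeval (R := R) y) =
    (maximalIdeal S).comap (MvPolynomial.aeval (R := R) x) := by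
  ext b
  rw [Ideal.mem_comap, Ideal.mem_comap, ← maximalIdeal_comap (g : T →+* B),
    ← maximalIdeal_comap (algebraMap S B), Ideal.mem_comap, Ideal.mem_comap,
    ← map_aeval_eq_algebraMap_aeval hxy, RingHom.coe_coe]

omit [IsLocalRing B] [IsLocalHom (algebraMap S B)] [IsLocalHom (g : T →+* B)] in
lemma map_localizedAeval_eq_algebraMap_localizedAeval {p : Ideal (MvPolynomial ι R)} [p.IsPrime]
    (hx : (maximalIdeal S).comap (MvPolynomial.aeval x) = p)
    (hy : (maximalIdeal T).comap (MvPolynomial.aeval y) = p) (a : Localization.AtPrime p) :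
    g (localizedAeval y hy a) = algebraMap S B (localizedAeval x hx a) := by
  have h : (g : T →+* B).comp (localizedAeval y hy : Localization.AtPrime p →+* T) =
      (algebraMap S B).comp (localizedAeval x hx : Localization.AtPrime p →+* S) :=
    IsLocalization.ringHom_ext p.primeCompl <| RingHom.ext fun b => by
      simp only [RingHom.comp_apply, RingHom.coe_coe, localizedAeval_algebraMap,
        map_aeval_eq_algebraMap_aeval hxy]
  exact DFunLike.congr_fun h a

theorem generatedByRegularSequence_ker_localizedAeval [Finite ι] [IsLocalRing R]
    [IsNoetherianRing R] [IsLocalHom (algebraMap R S)] [IsAdicComplete (maximalIdeal T) T]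
    [Module.Flat S B]
    (hT : IsWeaklyRegularHom R T (algebraMap R T)) (hg : Function.Surjective g)
    (hgker : GeneratedByRegularSequence T (RingHom.ker g))
    (hB : (maximalIdeal S).map (algebraMap S B) = maximalIdeal B)
    (hres : Function.Surjective ((residue B).comp (algebraMap S B)))
    (hker : RingHom.ker g ≤ Ideal.span (y '' {i | x i = 0}))
    (hx : Function.Surjective (localizedAeval (R := R) x rfl)) :
    GeneratedByRegularSequence _ (RingHom.ker (localizedAeval (R := R) x rfl)) := by
  let p := (maximalIdeal S).comap (MvPolynomial.aeval (R := R) x)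
  have hp : (maximalIdeal T).comap (MvPolynomial.aeval (R := R) y) = p :=
    comap_maximalIdeal_aeval_eq hxy
  let A := Localization.AtPrime p
  let _ : Algebra A S := (localizedAeval x rfl).toAlgebra
  let _ : Algebra A T := (localizedAeval y hp).toAlgebra
  let _ : Algebra A B := ((algebraMap S B).comp (algebraMap A S)).toAlgebra
  have : IsScalarTower A S B := .of_algebraMap_eq' rfl
  have : IsScalarTower R A T := .of_algebraMap_eq' (localizedAeval y hp).comp_algebraMap.symm
  have : IsLocalHom (algebraMap A T) := isLocalHom_localizedAeval hp
  let g' : T →ₐ[A] B :=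
    { g with commutes' := map_localizedAeval_eq_algebraMap_localizedAeval hxy rfl hp }
  have : IsLocalHom (g' : T →+* B) := ‹IsLocalHom (g : T →+* B)›
  have hkerA : RingHom.ker g' ≤ (maximalIdeal A).map (algebraMap A T) := by
    refine hker.trans (Ideal.span_le.2 ?_)
    rintro _ ⟨i, hi, rfl⟩
    have hip : MvPolynomial.X i ∈ p := by
      rw [Ideal.mem_comap, MvPolynomial.aeval_X, show x i = 0 from hi]
      exact zero_mem _
    have hiA := Ideal.mem_map_of_mem (algebraMap A T) (Localization.AtPrime.map_eq_maximalIdeal.le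
      (Ideal.mem_map_of_mem (algebraMap _ A) hip))
    rwa [show algebraMap A T (algebraMap _ A (MvPolynomial.X i)) = y i from
      (localizedAeval_algebraMap hp _).trans (MvPolynomial.aeval_X y i)] at hiA
  have : Module.FaithfullyFlat S B := .of_flat_of_isLocalHom
  exact generatedByRegularSequence_ker_of_isWeaklyRegularHom_of_isAdicComplete
    (isWeaklyRegularHom_localizationAtPrime_mvPolynomial (p := p)
      (comap_C_eq_maximalIdeal (y := x) rfl)) hT
    (map_maximalIdeal_eq_of_ker_le (g := g') hx hg hB hkerA)
    (residue_comp_algebraMap_surjective_of_algHom (g := g') hx hres) hx (g := g') hgker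

end CohenFactorization

/- Choose the variables so that they hit the generators of `S` and, with value `0` in `S`, the
regular sequence generating the kernel in a Cohen factorization `R → T → Ŝ`. -/
theorem exists_localizationAtPrime_mvPolynomial_of_isCIAt {R S : Type u} [CommRing R] [CommRing S]
    [IsLocalRing R] [IsLocalRing S] [IsNoetherianRing R] [IsNoetherianRing S] [Algebra R S]
    [IsLocalHom (algebraMap R S)] [Algebra.EssFiniteType R S]
    (hci : IsCIAt R S (algebraMap R S) (maximalIdeal S)) :
    ∃ (ι : Type u) (_ : Finite ι) (p : Ideal (MvPolynomial ι R)) (_ : p.IsPrime)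
      (π : Localization.AtPrime p →ₐ[R] S),
      Function.Surjective π ∧ GeneratedByRegularSequence _ (RingHom.ker π) := by
  obtain ⟨T, _, f, g, ⟨hgf, _, ⟨_, _⟩, hT, hg, _⟩, l, hl, hlg⟩ := hci
  let _ : Algebra R T := f.toAlgebra
  let g' : T →ₐ[R] AdicCompletion (maximalIdeal S) S :=
    { g with commutes' := fun r => DFunLike.congr_fun hgf r }
  let ι := {s // s ∈ Algebra.EssFiniteType.finset R S} ⊕ {t // t ∈ l}
  let x : ι → S := Sum.elim Subtype.val 0
  let y : ι → T := Sum.elim (fun s => Function.surjInv hg (algebraMap S _ s)) Subtype.val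
  have hxy : g' ∘ y = algebraMap S _ ∘ x := by
    ext (s | t) : 1
    · exact Function.surjInv_eq hg _
    · exact (hlg.le (Ideal.subset_span t.2) : g t = 0).trans (map_zero _).symm
  have : IsLocalHom (g' : T →+* AdicCompletion (maximalIdeal S) S) := ‹IsLocalHom g›
  have := AdicCompletion.flat_of_isNoetherian (maximalIdeal S)
  have : Finite {t // t ∈ l} := l.finite_toSet
  have hx : Function.Surjective (localizedAeval (R := R) x rfl) :=
    localizedAeval_surjective rfl fun s hs => ⟨.inl ⟨s, hs⟩, rfl⟩
  exact ⟨ι, inferInstance, _, inferInstance, localizedAeval x rfl, hx,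
    generatedByRegularSequence_ker_localizedAeval hxy hT hg ⟨l, hl, hlg⟩
      AdicCompletion.maximalIdeal_eq_map.symm
      (residue_comp_algebraMap_adicCompletion_surjective S)
      (hlg.ge.trans (Ideal.span_mono fun t ht => ⟨.inr ⟨t, ht⟩, rfl, rfl⟩)) hx⟩

section HomologicalDimension

open CategoryTheory

section CharacterModule

variable {Q : Type u} [CommRing Q] {K F N : Type u} [AddCommGroup K] [AddCommGroup F]
  [AddCommGroup N] [Module Q K] [Module Q F] [Module Q N]

/-- The character dual `N⋆ → F⋆ → K⋆` of a complex of modules `K → F → N`. -/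
def characterDual (f : K →ₗ[Q] F) (g : F →ₗ[Q] N) (h : g ∘ₗ f = 0) :
    ShortComplex (ModuleCat.{u} Q) :=
  .mk (ModuleCat.ofHom (CharacterModule.dual g)) (ModuleCat.ofHom (CharacterModule.dual f)) <| by
    rw [← ModuleCat.ofHom_comp, ← CharacterModule.dual_comp, h, CharacterModule.dual_zero]
    rfl

lemma characterDual_shortExact {f : K →ₗ[Q] F} {g : F →ₗ[Q] N} (hfg : Function.Exact f g)
    (hf : Function.Injective f) (hg : Function.Surjective g) :
    (characterDual f g hfg.linearMap_comp_eq_zero).ShortExact where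
  exact := (ShortComplex.moduleCat_exact_iff _).2 fun (χ : CharacterModule F) hχ => by
    have hχf : g.toAddMonoidHom.ker ≤
        AddMonoidHom.ker (χ : F →+ AddCircle (1 : ℚ)) := fun b hb => by
      obtain ⟨a, rfl⟩ := (hfg b).1 hb
      exact DFunLike.congr_fun (F := CharacterModule K) hχ a
    exact ⟨(g.toAddMonoidHom.liftOfSurjective hg ⟨χ, hχf⟩ : CharacterModule N),
      CharacterModule.ext F <| AddMonoidHom.liftOfRightInverse_comp_apply _ _
        (Function.rightInverse_surjInv hg) ⟨χ, hχf⟩⟩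
  mono_f := (ModuleCat.mono_iff_injective _).2 (CharacterModule.dual_injective_of_surjective g hg)
  epi_g := (ModuleCat.epi_iff_surjective _).2 (CharacterModule.dual_surjective_of_injective f hf)

end CharacterModule

section FlatDimension

variable {Q : Type u} [CommRing Q] {n : ℕ}

/- Lambek: the flat dimension of a module is the injective dimension of its character dual, so
long exact sequences of `Ext` apply to it. -/
lemma flatDimLE_iff_hasInjectiveDimensionLT (n : ℕ) (N : Type u) [AddCommGroup N] [Module Q N] :
    FlatDimLE Q n N ↔
      HasInjectiveDimensionLT (ModuleCat.of Q (CharacterModule N)) (n + 1) := by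
  have hker {F N : Type u} [AddCommGroup F] [AddCommGroup N] [Module Q F] [Module Q N]
      {f : F →ₗ[Q] N} (hF : Module.Flat Q F) (hf : Function.Surjective f) (n : ℕ) :
      HasInjectiveDimensionLT (ModuleCat.of Q (CharacterModule (LinearMap.ker f))) (n + 1) ↔
        HasInjectiveDimensionLT (ModuleCat.of Q (CharacterModule N)) (n + 2) :=
    (characterDual_shortExact f.exact_subtype_ker_map Subtype.val_injective
      hf).hasInjectiveDimensionLT_X₃_iff n <| (Module.injective_iff_injective_object _ _).1 <|
        Module.Flat.iff_characterModule_injective.1 hF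
  induction n generalizing N with
  | zero =>
    rw [FlatDimLE, Module.Flat.iff_characterModule_injective,
      Module.injective_iff_injective_object, injective_iff_hasInjectiveDimensionLT_one]
  | succ n ih =>
    refine ⟨fun ⟨F, _, _, f, hF, hf, h⟩ => (hker hF hf n).1 ((ih _).1 h), fun h => ?_⟩
    have hf : Function.Surjective (Finsupp.linearCombination Q (id : N → N)) :=
      Finsupp.linearCombination_id_surjective Q N
    exact ⟨N →₀ Q, _, _, _, inferInstance, hf, (ih _).2 ((hker inferInstance hf n).2 h)⟩

variable {K F N N' : Type u} [AddCommGroup K] [AddCommGroup F] [AddCommGroup N] [AddCommGroup N']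
  [Module Q K] [Module Q F] [Module Q N] [Module Q N']

lemma flatDimLE_of_linearEquiv (e : N ≃ₗ[Q] N') (h : FlatDimLE Q n N) : FlatDimLE Q n N' := by
  rw [flatDimLE_iff_hasInjectiveDimensionLT] at h ⊢
  exact hasInjectiveDimensionLT_of_iso (CharacterModule.congr e).toModuleIso _

lemma flatDimLE_succ_of_exact {f : K →ₗ[Q] F} {g : F →ₗ[Q] N} (hfg : Function.Exact f g)
    (hf : Function.Injective f) (hg : Function.Surjective g) (hK : FlatDimLE Q n K)
    (hF : FlatDimLE Q n F) : FlatDimLE Q (n + 1) N := by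
  rw [flatDimLE_iff_hasInjectiveDimensionLT] at hK hF ⊢
  have : HasInjectiveDimensionLT (ModuleCat.of Q (CharacterModule F)) (n + 1 + 1) :=
    hasInjectiveDimensionLT_of_ge _ (n + 1) _ n.succ.le_succ
  exact (characterDual_shortExact hfg hf hg).hasInjectiveDimensionLT_X₁ (n + 1) hK this

lemma flatDimLE_baseChange (P : Type u) [CommRing P] [Algebra Q P] [Module.Flat Q P]
    (h : FlatDimLE Q n N) : FlatDimLE P n (P ⊗[Q] N) := by
  induction n generalizing N with
  | zero =>
    have : Module.Flat Q N := h
    exact (inferInstance : Module.Flat P (P ⊗[Q] N))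
  | succ n ih =>
    obtain ⟨F, _, _, f, hF, hf, hker⟩ := h
    have hinj : Function.Injective ((LinearMap.ker f).subtype.baseChange P) :=
      Module.Flat.lTensor_preserves_injective_linearMap _ Subtype.val_injective
    have hrange : LinearMap.range ((LinearMap.ker f).subtype.baseChange P) =
        LinearMap.ker (f.baseChange P) :=
      SetLike.ext fun x => (lTensor_exact P f.exact_subtype_ker_map hf x).symm
    exact ⟨P ⊗[Q] F, _, _, f.baseChange P, inferInstance, LinearMap.lTensor_surjective P hf,
      flatDimLE_of_linearEquiv ((LinearEquiv.ofInjective _ hinj).trans (.ofEq _ _ hrange))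
        (ih hker)⟩

end FlatDimension

section PolynomialModule

open Polynomial

variable (Q N : Type u) [CommRing Q] [AddCommGroup N] [Module Q N] [Module Q[X] N]
  [IsScalarTower Q Q[X] N]

/-- The endomorphism `X ⊗ 1 - 1 ⊗ X` of `Q[X] ⊗ N` for a `Q[X]`-module `N`, whose cokernel
is `N`. -/
noncomputable def tensorXSubX : Q[X] ⊗[Q] N →ₗ[Q[X]] Q[X] ⊗[Q] N :=
  (X : Q[X]) • LinearMap.id - (Algebra.lsmul Q Q N (X : Q[X])).baseChange Q[X]

/-- The action map `Q[X] ⊗ N → N` of a `Q[X]`-module `N`. -/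
noncomputable def polynomialAction : Q[X] ⊗[Q] N →ₗ[Q[X]] N :=
  (LinearMap.id : N →ₗ[Q] N).liftBaseChange Q[X]

variable {Q N}

@[simp]
lemma tensorXSubX_tmul (a : Q[X]) (m : N) :
    tensorXSubX Q N (a ⊗ₜ m) = (X * a) ⊗ₜ m - a ⊗ₜ ((X : Q[X]) • m) := by
  simp [tensorXSubX, smul_tmul']

@[simp]
lemma polynomialAction_tmul (a : Q[X]) (m : N) : polynomialAction Q N (a ⊗ₜ m) = a • m := by
  simp [polynomialAction]

lemma tensorXSubX_injective : Function.Injective (tensorXSubX Q N) := by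
  let E := TensorProduct.equivFinsuppOfBasisLeft (N := N) (basisMonomials Q)
  have hE (a : Q[X]) (m : N) (i : ℕ) : E (a ⊗ₜ m) i = a.coeff i • m :=
    TensorProduct.equivFinsuppOfBasisLeft_apply_tmul_apply _ _ _ _
  have hcoeff (z : Q[X] ⊗[Q] N) (i : ℕ) :
      E (tensorXSubX Q N z) (i + 1) = E z i - (X : Q[X]) • E z (i + 1) := by
    induction z with
    | zero => simp
    | add z w hz hw => simp only [map_add, Finsupp.add_apply, hz, hw, smul_add]; abel
    | tmul a m => simp only [tensorXSubX_tmul, map_sub, Finsupp.sub_apply, hE, coeff_X_mul,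
        smul_comm _ (X : Q[X])]
  refine (injective_iff_map_eq_zero _).2 fun z hz => (map_eq_zero_iff E E.injective).1 ?_
  have hstep (i : ℕ) : E z i = (X : Q[X]) • E z (i + 1) := by
    rw [← sub_eq_zero, ← hcoeff, hz, map_zero, Finsupp.zero_apply]
  have hpow (i k : ℕ) : E z i = (X : Q[X]) ^ k • E z (i + k) := by
    induction k with
    | zero => simp
    | succ k ih => rw [ih, hstep (i + k), smul_smul, ← pow_succ, add_assoc]
  obtain ⟨B, hB⟩ := (E z).support.bddAbove
  refine Finsupp.ext fun i => ?_
  have hzero : E z (i + (B + 1)) = 0 := by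
    by_contra h
    have := hB (Finsupp.mem_support_iff.2 h)
    omega
  rw [hpow i (B + 1), hzero, smul_zero, Finsupp.zero_apply]

lemma tmul_sub_one_tmul_smul_mem_range_tensorXSubX (a : Q[X]) (m : N) :
    a ⊗ₜ[Q] m - 1 ⊗ₜ (a • m) ∈ LinearMap.range (tensorXSubX Q N) := by
  induction a using Polynomial.induction_on' with
  | add a b ha hb =>
    convert add_mem ha hb using 1
    rw [add_tmul, add_smul, tmul_add]
    abel
  | monomial k c =>
    induction k generalizing m with
    | zero =>
      rw [monomial_zero_left, C_eq_algebraMap, algebraMap_smul, tmul_smul,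
        Algebra.algebraMap_eq_smul_one, smul_tmul', sub_self]
      exact zero_mem _
    | succ k ih =>
      convert add_mem (LinearMap.mem_range_self _ (monomial k c ⊗ₜ m)) (ih ((X : Q[X]) • m))
        using 1
      rw [tensorXSubX_tmul, sub_add_sub_cancel, X_mul_monomial, smul_smul, monomial_mul_X]

lemma exact_tensorXSubX_polynomialAction :
    Function.Exact (tensorXSubX Q N) (polynomialAction Q N) := by
  refine LinearMap.exact_of_comp_of_mem_range ?_ fun z hz => ?_
  · ext m
    simp
  · have hsub (z : Q[X] ⊗[Q] N) :
        z - 1 ⊗ₜ polynomialAction Q N z ∈ LinearMap.range (tensorXSubX Q N) := by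
      induction z with
      | zero => simp
      | add z w hz hw =>
        convert add_mem hz hw using 1
        rw [map_add, tmul_add]
        abel
      | tmul a m =>
        rw [polynomialAction_tmul]
        exact tmul_sub_one_tmul_smul_mem_range_tensorXSubX a m
    simpa [hz] using hsub z

theorem flatDimLE_succ_polynomial {n : ℕ} (h : FlatDimLE Q n N) : FlatDimLE Q[X] (n + 1) N :=
  flatDimLE_succ_of_exact exact_tensorXSubX_polynomialAction tensorXSubX_injective
    (fun m => ⟨1 ⊗ₜ m, by simp⟩) (flatDimLE_baseChange _ h) (flatDimLE_baseChange _ h)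

end PolynomialModule

section HilbertSyzygy

/-- Modules over the `Q`-algebra `D` which have finite flat dimension over `Q` have finite flat
dimension over `D`. -/
def PreservesFiniteFlatDim (Q D : Type u) [CommRing Q] [CommRing D] [Algebra Q D] : Prop :=
  ∀ (N : Type u) [AddCommGroup N] [Module Q N] [Module D N] [IsScalarTower Q D N],
    FlatDimFinite Q N → FlatDimFinite D N

variable {Q C D : Type u} [CommRing Q] [CommRing C] [CommRing D] [Algebra Q C] [Algebra Q D]

lemma preservesFiniteFlatDim_of_bijective (h : Function.Bijective (algebraMap Q D)) :
    PreservesFiniteFlatDim Q D := by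
  intro N _ _ _ _ ⟨n, hn⟩
  have : Module.Flat Q D := .of_linearEquiv (LinearEquiv.ofBijective (Algebra.linearMap Q D) h).symm
  have := TensorProduct.CompatibleSMul.of_algebraMap_surjective (R := Q) (A := D) D N h.2
  exact ⟨n, flatDimLE_of_linearEquiv (TensorProduct.lidOfCompatibleSMul Q D N)
    (flatDimLE_baseChange D hn)⟩

lemma preservesFiniteFlatDim_trans [Algebra C D] [IsScalarTower Q C D]
    (h₁ : PreservesFiniteFlatDim Q C) (h₂ : PreservesFiniteFlatDim C D) :
    PreservesFiniteFlatDim Q D := by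
  intro N _ _ _ _ hN
  let _ : Module C N := Module.compHom N (algebraMap C D)
  have : IsScalarTower C D N := .of_algebraMap_smul fun _ _ => rfl
  have : IsScalarTower Q C N := .of_algebraMap_smul fun q m => by
    rw [← algebraMap_smul D, ← IsScalarTower.algebraMap_apply, algebraMap_smul]
  exact h₂ N (h₁ N hN)

lemma preservesFiniteFlatDim_of_algEquiv (e : C ≃ₐ[Q] D) (h : PreservesFiniteFlatDim Q C) :
    PreservesFiniteFlatDim Q D := by
  let _ : Algebra C D := (e : C →+* D).toAlgebra
  have : IsScalarTower Q C D := .of_algebraMap_eq fun q => (e.commutes q).symm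
  exact preservesFiniteFlatDim_trans h (preservesFiniteFlatDim_of_bijective e.bijective)

lemma preservesFiniteFlatDim_polynomial : PreservesFiniteFlatDim Q (Polynomial Q) :=
  fun _ _ _ _ _ ⟨n, hn⟩ => ⟨n + 1, flatDimLE_succ_polynomial hn⟩

theorem preservesFiniteFlatDim_mvPolynomial (Q ι : Type u) [CommRing Q] [Finite ι] :
    PreservesFiniteFlatDim Q (MvPolynomial ι Q) := by
  induction ι using Finite.induction_empty_option with
  | of_equiv e h => exact preservesFiniteFlatDim_of_algEquiv (MvPolynomial.renameEquiv Q e) h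
  | h_empty =>
    exact preservesFiniteFlatDim_of_bijective (MvPolynomial.isEmptyAlgEquiv Q PEmpty).symm.bijective
  | h_option h =>
    exact preservesFiniteFlatDim_of_algEquiv (MvPolynomial.optionEquivLeft Q _).symm
      (preservesFiniteFlatDim_trans h preservesFiniteFlatDim_polynomial)

end HilbertSyzygy

section ProjectiveDimension

lemma projDimLE_of_hasProjectiveDimensionLT {Q : Type u} [CommRing Q] {n : ℕ} {N : Type u}
    [AddCommGroup N] [Module Q N] (h : HasProjectiveDimensionLT (ModuleCat.of Q N) (n + 1)) :
    ProjDimLE Q n N := by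
  induction n generalizing N with
  | zero =>
    exact (IsProjective.iff_projective N).2 (projective_iff_hasProjectiveDimensionLT_one.2 h)
  | succ n ih =>
    have hf : Function.Surjective (Finsupp.linearCombination Q (id : N → N)) :=
      Finsupp.linearCombination_id_surjective Q N
    have hfree := (IsProjective.iff_projective (R := Q) (N →₀ Q)).1 inferInstance
    exact ⟨N →₀ Q, _, _, _, inferInstance, hf,
      ih (((LinearMap.shortExact_shortComplexKer hf).hasProjectiveDimensionLT_X₃_iff n hfree).1 h)⟩

lemma projDimFinite_of_generatedByRegularSequence_ker {Q T : Type u} [CommRing Q] [CommRing T]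
    [IsLocalRing Q] [IsNoetherianRing Q] [Algebra Q T]
    (hs : Function.Surjective (algebraMap Q T))
    (hker : GeneratedByRegularSequence Q (RingHom.ker (algebraMap Q T))) : ProjDimFinite Q T := by
  obtain ⟨l, hl, hlker⟩ := hker
  have hdim :
      HasProjectiveDimensionLE (ModuleCat.of Q (Shrink.{u} (Q ⧸ Ideal.ofList l))) l.length :=
    (projectiveDimension_le_iff _ _).1 (ModuleCat.projectiveDimension_quotient_eq_length l hl).le
  let e : Shrink.{u} (Q ⧸ Ideal.ofList l) ≃ₗ[Q] T :=
    (Shrink.linearEquiv Q _).trans <| (Submodule.quotEquivOfEq _ _ hlker).trans <|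
      (Algebra.linearMap Q T).quotKerEquivOfSurjective hs
  exact ⟨l.length, projDimLE_of_hasProjectiveDimensionLT
    (hasProjectiveDimensionLT_of_iso e.toModuleIso (l.length + 1))⟩

end ProjectiveDimension

end HomologicalDimension

section FiniteCIDimension

-- Through this, `TensorProduct.leftModule` lets `Q` act on `T ⊗[R] M` by its action on `T`.
lemma smulCommClass_of_algebra (R Q T : Type*) [CommRing R] [CommRing Q] [CommRing T] [Algebra R T]
    [Algebra Q T] : SMulCommClass R Q T :=
  ⟨fun r q t => by simp only [Algebra.smul_def, mul_left_comm]⟩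

attribute [local instance] smulCommClass_of_algebra

section QuasiDeformation

variable {R M : Type u} [CommRing R] [AddCommGroup M] [Module R M]

lemma compHom_algebraMap_eq_leftModule {T Q : Type u} [CommRing T] [CommRing Q] [Algebra R T]
    [Algebra Q T] : Module.compHom (T ⊗[R] M) (algebraMap Q T) = TensorProduct.leftModule :=
  Module.ext' _ _ fun q x => algebraMap_smul T q x

theorem hasFiniteCIDim_of_flatDimFinite {T Q : Type u} [CommRing T] [CommRing Q] [IsLocalRing T]
    [IsLocalRing Q] [IsNoetherianRing T] [IsNoetherianRing Q] [iT : Algebra R T] [iQ : Algebra Q T]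
    [hflat : Module.Flat R T] (hloc : IsLocalHom (algebraMap R T))
    (hs : Function.Surjective (algebraMap Q T))
    (hker : GeneratedByRegularSequence Q (RingHom.ker (algebraMap Q T)))
    (hdim : FlatDimFinite Q (T ⊗[R] M)) : HasFiniteCIDim R M := by
  have hproj := projDimFinite_of_generatedByRegularSequence_ker hs hker
  rw [← compHom_algebraMap_eq_leftModule] at hdim
  obtain ⟨f, rfl⟩ : ∃ f : R →+* T, iT = f.toAlgebra :=
    ⟨algebraMap R T, toAlgebra_algebraMap.symm⟩
  obtain ⟨g, rfl⟩ : ∃ g : Q →+* T, iQ = g.toAlgebra :=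
    ⟨algebraMap Q T, toAlgebra_algebraMap.symm⟩
  exact ⟨T, Q, inferInstance, inferInstance, f, g, ⟨inferInstance, inferInstance, inferInstance,
    inferInstance, hloc, hs.isLocalHom g, hflat, hs, hker⟩, hdim, hproj⟩

lemma exists_flatDimFinite_of_hasFiniteCIDim (h : HasFiniteCIDim R M) :
    ∃ (T Q : Type u) (_ : CommRing T) (_ : CommRing Q) (_ : Algebra R T) (_ : Algebra Q T),
      IsLocalRing T ∧ IsLocalRing Q ∧ IsNoetherianRing T ∧ IsNoetherianRing Q ∧
      Module.Flat R T ∧ IsLocalHom (algebraMap R T) ∧ Function.Surjective (algebraMap Q T) ∧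
      GeneratedByRegularSequence Q (RingHom.ker (algebraMap Q T)) ∧
      FlatDimFinite Q (T ⊗[R] M) := by
  obtain ⟨T, Q, _, _, f, g, ⟨hT, hQ, hT', hQ', hf, -, hflat, hg, hker⟩, hdim, -⟩ := h
  refine ⟨T, Q, _, _, f.toAlgebra, g.toAlgebra, hT, hQ, hT', hQ', hflat, hf, hg, hker, ?_⟩
  rwa [← @compHom_algebraMap_eq_leftModule]

end QuasiDeformation

lemma generatedByRegularSequence_map_of_flat {Q P : Type u} [CommRing Q] [CommRing P] [Algebra Q P]
    [Module.Flat Q P] {I : Ideal Q} (hI : GeneratedByRegularSequence Q I)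
    (htop : I.map (algebraMap Q P) ≠ ⊤) :
    GeneratedByRegularSequence P (I.map (algebraMap Q P)) := by
  obtain ⟨l, hl, rfl⟩ := hI
  rw [Ideal.map_ofList] at htop ⊢
  exact ⟨_, isRegular_iff_isWeaklyRegular_and_ne_top.2 ⟨hl.toIsWeaklyRegular.of_flat, htop⟩, rfl⟩

section Localization

variable {B C D M : Type u} [CommRing B] [CommRing C] [CommRing D] [Algebra B C] [Algebra D C]
  [AddCommGroup M] [Module B M]

lemma flatDimFinite_of_isPushout {P W : Type u} [CommRing P] [CommRing W] [Algebra D P]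
    [Algebra D W] [Algebra P W] [Algebra C W] [IsScalarTower D P W] [IsScalarTower D C W]
    [Algebra.IsPushout D P C W] [Module.Flat D P] [Module C M] [Module D M] [IsScalarTower D C M]
    (h : FlatDimFinite D M) : FlatDimFinite P (W ⊗[C] M) := by
  obtain ⟨n, hn⟩ := h
  exact ⟨n, flatDimLE_of_linearEquiv (Algebra.IsPushout.cancelBaseChange D P C W M).symm
    (flatDimLE_baseChange P hn)⟩

lemma isPushout_localizationAtPrime (hs : Function.Surjective (algebraMap D C)) (q₀ : Ideal D)
    [q₀.IsPrime] (q : Ideal C) [q.IsPrime] [q.LiesOver q₀]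
    [Algebra (Localization.AtPrime q₀) (Localization.AtPrime q)]
    [Localization.AtPrime.IsLiesOverAlgebra q₀ q] :
    Algebra.IsPushout D (Localization.AtPrime q₀) C (Localization.AtPrime q) := by
  obtain rfl : q₀ = q.comap (algebraMap D C) := Ideal.LiesOver.over
  have hsub : Algebra.algebraMapSubmonoid C (q.comap (algebraMap D C)).primeCompl = q.primeCompl :=
    Submonoid.map_comap_eq_of_surjective hs q.primeCompl
  have : IsLocalization (Algebra.algebraMapSubmonoid C (q.comap (algebraMap D C)).primeCompl)
      (Localization.AtPrime q) := by rw [hsub]; infer_instance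
  exact (Algebra.isPushout_of_isLocalization (q.comap (algebraMap D C)).primeCompl _ _ _).symm

lemma flatDimFinite_localizationAtPrime (hs : Function.Surjective (algebraMap D C))
    (p : Ideal B) [p.IsPrime] (q₀ : Ideal D) [q₀.IsPrime] (q : Ideal C) [q.IsPrime] [q.LiesOver p]
    [q.LiesOver q₀] [Algebra (Localization.AtPrime p) (Localization.AtPrime q)]
    [Algebra (Localization.AtPrime q₀) (Localization.AtPrime q)]
    [Localization.AtPrime.IsLiesOverAlgebra p q] [Localization.AtPrime.IsLiesOverAlgebra q₀ q]
    [Module (Localization.AtPrime p) M] [IsScalarTower B (Localization.AtPrime p) M]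
    (h : FlatDimFinite D (C ⊗[B] M)) :
    FlatDimFinite (Localization.AtPrime q₀)
      (Localization.AtPrime q ⊗[Localization.AtPrime p] M) := by
  have := isPushout_localizationAtPrime hs q₀ q
  have := IsLocalization.tensorProduct_compatibleSMul p.primeCompl (Localization.AtPrime p)
    (Localization.AtPrime q) M
  let e : Localization.AtPrime q ⊗[C] (C ⊗[B] M) ≃ₗ[Localization.AtPrime q]
      Localization.AtPrime q ⊗[Localization.AtPrime p] M :=
    (AlgebraTensorModule.cancelBaseChange B C _ _ M).trans
      (equivOfCompatibleSMul B (Localization.AtPrime p) _ _ M).symm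
  obtain ⟨n, hn⟩ : FlatDimFinite (Localization.AtPrime q₀)
      (Localization.AtPrime q ⊗[C] (C ⊗[B] M)) := flatDimFinite_of_isPushout h
  exact ⟨n, flatDimLE_of_linearEquiv (e.restrictScalars _) hn⟩

theorem hasFiniteCIDim_localizationAtPrime [Module.FaithfullyFlat B C] [IsNoetherianRing C]
    [IsNoetherianRing D] (hs : Function.Surjective (algebraMap D C))
    (hker : GeneratedByRegularSequence D (RingHom.ker (algebraMap D C))) (p : Ideal B) [p.IsPrime]
    [Module (Localization.AtPrime p) M] [IsScalarTower B (Localization.AtPrime p) M]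
    (h : FlatDimFinite D (C ⊗[B] M)) : HasFiniteCIDim (Localization.AtPrime p) M := by
  obtain ⟨q, _, _⟩ := Ideal.exists_isPrime_liesOver_of_faithfullyFlat (B := C) p
  let _ := Localization.AtPrime.algebraOfLiesOver p q
  let _ := Localization.AtPrime.algebraOfLiesOver (q.under D) q
  have hmap : RingHom.ker
      (algebraMap (Localization.AtPrime (q.under D)) (Localization.AtPrime q)) =
        (RingHom.ker (algebraMap D C)).map (algebraMap D _) :=
    ker_localRingHom_comap hs q
  have hloc : IsLocalHom (algebraMap (Localization.AtPrime p) (Localization.AtPrime q)) :=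
    Localization.isLocalHom_localRingHom p q _ Ideal.LiesOver.over
  refine hasFiniteCIDim_of_flatDimFinite (T := Localization.AtPrime q)
    (Q := Localization.AtPrime (q.under D)) hloc
    (RingHom.surjective_localRingHom_of_surjective (algebraMap D C) hs q) ?_
    (flatDimFinite_localizationAtPrime hs p _ q h)
  rw [hmap]
  exact generatedByRegularSequence_map_of_flat hker (hmap ▸ RingHom.ker_ne_top _)

end Localization

section MvPolynomial

attribute [local instance] MvPolynomial.algebraMvPolynomial

variable {R : Type u} (ι : Type u) [CommRing R]

lemma faithfullyFlat_mvPolynomial (T : Type u) [CommRing T] [Algebra R T]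
    [Module.FaithfullyFlat R T] :
    Module.FaithfullyFlat (MvPolynomial ι R) (MvPolynomial ι T) :=
  .of_linearEquiv _ _
    (Algebra.IsPushout.equiv R (MvPolynomial ι R) T (MvPolynomial ι T)).toLinearEquiv.symm

variable {M : Type u} [AddCommGroup M] [Module R M] [Module (MvPolynomial ι R) M]
  [IsScalarTower R (MvPolynomial ι R) M]

lemma flatDimFinite_mvPolynomial [Finite ι] {T Q : Type u} [CommRing T] [CommRing Q] [Algebra R T]
    [Algebra Q T] (h : FlatDimFinite Q (T ⊗[R] M)) :
    FlatDimFinite (MvPolynomial ι Q) (MvPolynomial ι T ⊗[MvPolynomial ι R] M) := by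
  refine preservesFiniteFlatDim_mvPolynomial Q ι _ ?_
  obtain ⟨n, hn⟩ := h
  let e : MvPolynomial ι T ⊗[MvPolynomial ι R] M ≃ₗ[T] T ⊗[R] M :=
    Algebra.IsPushout.cancelBaseChange R T (MvPolynomial ι R) (MvPolynomial ι T) M
  exact ⟨n, flatDimLE_of_linearEquiv (e.symm.restrictScalars Q) hn⟩

theorem hasFiniteCIDim_localizationAtPrime_mvPolynomial [Finite ι] [IsLocalRing R]
    (p : Ideal (MvPolynomial ι R)) [p.IsPrime] [Module (Localization.AtPrime p) M]
    [IsScalarTower (MvPolynomial ι R) (Localization.AtPrime p) M] (h : HasFiniteCIDim R M) :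
    HasFiniteCIDim (Localization.AtPrime p) M := by
  obtain ⟨T, Q, _, _, _, _, _, _, _, _, _, _, hs, hker, hdim⟩ :=
    exists_flatDimFinite_of_hasFiniteCIDim h
  have : Module.FaithfullyFlat R T := .of_flat_of_isLocalHom
  have := faithfullyFlat_mvPolynomial (R := R) ι T
  have hmap : RingHom.ker (algebraMap (MvPolynomial ι Q) (MvPolynomial ι T)) =
      (RingHom.ker (algebraMap Q T)).map (algebraMap Q (MvPolynomial ι Q)) :=
    MvPolynomial.ker_map _
  refine hasFiniteCIDim_localizationAtPrime (MvPolynomial.map_surjective _ hs) ?_ p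
    (flatDimFinite_mvPolynomial ι hdim)
  rw [hmap]
  exact generatedByRegularSequence_map_of_flat hker (hmap ▸ RingHom.ker_ne_top _)

end MvPolynomial

section Quotient

attribute [local instance] Algebra.TensorProduct.rightAlgebra

variable {A S W : Type u} [CommRing A] [CommRing S] [CommRing W] [Algebra A S] [Algebra A W]

lemma ker_algebraMap_tensorProduct_right (hπ : Function.Surjective (algebraMap A S)) :
    RingHom.ker (algebraMap W (S ⊗[A] W)) =
      (RingHom.ker (algebraMap A S)).map (algebraMap A W) := by
  let e : A ⊗[A] W ≃ₐ[A] W := Algebra.TensorProduct.lid A W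
  let f : A ⊗[A] W →ₐ[A] S ⊗[A] W := Algebra.TensorProduct.map (Algebra.ofId A S) (AlgHom.id A W)
  have hcomp : algebraMap W (S ⊗[A] W) = (f : A ⊗[A] W →+* S ⊗[A] W).comp e.symm.toRingEquiv := by
    ext w
    simp [e, f, Algebra.TensorProduct.right_algebraMap_apply]
  have hincl : (e : A ⊗[A] W →+* W).comp
      (Algebra.TensorProduct.includeLeft : A →ₐ[A] A ⊗[A] W) = algebraMap A W := by
    ext a
    simp [e, Algebra.algebraMap_eq_smul_one]
  have hf : RingHom.ker (f : A ⊗[A] W →+* S ⊗[A] W) =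
      (RingHom.ker (algebraMap A S)).map
        (Algebra.TensorProduct.includeLeft : A →ₐ[A] A ⊗[A] W) :=
    Algebra.TensorProduct.rTensor_ker (Algebra.ofId A S) hπ
  rw [hcomp, ← RingHom.comap_ker, hf, ← hincl, ← Ideal.map_map]
  exact Ideal.comap_symm (e : A ⊗[A] W ≃+* W)

lemma surjective_algebraMap_tensorProduct_right (hπ : Function.Surjective (algebraMap A S)) :
    Function.Surjective (algebraMap W (S ⊗[A] W)) :=
  Algebra.TensorProduct.includeRight_surjective W hπ

lemma isLocalRing_tensorProduct [IsLocalRing A] [Nontrivial S] [IsLocalRing W] [Module.Flat A W]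
    [IsLocalHom (algebraMap A W)] (hπ : Function.Surjective (algebraMap A S)) :
    IsLocalRing (S ⊗[A] W) := by
  have : Module.FaithfullyFlat A W := .of_flat_of_isLocalHom
  have : Nontrivial (S ⊗[A] W) := Module.FaithfullyFlat.rTensor_nontrivial A W S
  exact .of_surjective' _ (surjective_algebraMap_tensorProduct_right hπ)

lemma isLocalHom_algebraMap_tensorProduct [IsLocalRing W] [Nontrivial (S ⊗[A] W)]
    [IsLocalHom (algebraMap A W)] (hπ : Function.Surjective (algebraMap A S)) :
    IsLocalHom (algebraMap S (S ⊗[A] W)) := by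
  have := (surjective_algebraMap_tensorProduct_right (W := W) hπ).isLocalHom
    (algebraMap W (S ⊗[A] W))
  refine ⟨fun s hs => ?_⟩
  obtain ⟨a, rfl⟩ := hπ s
  rw [← IsScalarTower.algebraMap_apply, IsScalarTower.algebraMap_apply A W] at hs
  exact ((hs.of_map _ _).of_map _ _).map _

theorem hasFiniteCIDim_of_surjective {M : Type u} [IsLocalRing A] [Nontrivial S] [AddCommGroup M]
    [Module A M] [Module S M] [IsScalarTower A S M] (hπ : Function.Surjective (algebraMap A S))
    (hker : GeneratedByRegularSequence A (RingHom.ker (algebraMap A S))) (h : HasFiniteCIDim A M) :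
    HasFiniteCIDim S M := by
  obtain ⟨T, Q, _, _, _, _, _, _, _, _, _, _, hs, hkerQ, n, hn⟩ :=
    exists_flatDimFinite_of_hasFiniteCIDim h
  have hsT := surjective_algebraMap_tensorProduct_right (W := T) hπ
  have hkerT := ker_algebraMap_tensorProduct_right (W := T) hπ
  let _ : Algebra Q (S ⊗[A] T) := ((algebraMap T (S ⊗[A] T)).comp (algebraMap Q T)).toAlgebra
  have : IsScalarTower Q T (S ⊗[A] T) := .of_algebraMap_eq' rfl
  have : IsLocalRing (S ⊗[A] T) := isLocalRing_tensorProduct hπ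
  have : IsNoetherianRing (S ⊗[A] T) := isNoetherianRing_of_surjective _ _ _ hsT
  let e : (S ⊗[A] T) ⊗[S] M ≃ₗ[T] T ⊗[A] M :=
    Algebra.IsPushout.cancelBaseChange A T S (S ⊗[A] T) M
  refine hasFiniteCIDim_of_flatDimFinite (T := S ⊗[A] T) (Q := Q)
    (isLocalHom_algebraMap_tensorProduct hπ) (hsT.comp hs) ?_
    ⟨n, flatDimLE_of_linearEquiv (e.symm.restrictScalars Q) hn⟩
  refine generatedByRegularSequence_ker_comp hs hkerQ ?_
  rw [hkerT]
  exact generatedByRegularSequence_map_of_flat hker (hkerT ▸ RingHom.ker_ne_top _)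

end Quotient

end FiniteCIDimension

end CIDimension

open CIDimension in
theorem ascent_CIfd_of_flat_eft_ci_general {R S M : Type u} [CommRing R] [CommRing S]
    [IsLocalRing R] [IsLocalRing S] [IsNoetherianRing R] [IsNoetherianRing S] [Algebra R S]
    [IsLocalHom (algebraMap R S)] [AddCommGroup M] [Module R M] [Module S M] [IsScalarTower R S M]
    [Algebra.EssFiniteType R S] (hci : IsCIAt R S (algebraMap R S) (maximalIdeal S))
    (hfd : HasFiniteCIDim R M) : HasFiniteCIDim S M := by
  obtain ⟨ι, _, p, _, π, hπ, hker⟩ := exists_localizationAtPrime_mvPolynomial_of_isCIAt hci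
  let B := MvPolynomial ι R
  let A := Localization.AtPrime p
  let _ : Algebra A S := π.toAlgebra
  let _ : Module A M := Module.compHom M (algebraMap A S)
  let _ : Module B M := Module.compHom M (algebraMap B A)
  have : IsScalarTower B A M := .of_algebraMap_smul fun _ _ => rfl
  have : IsScalarTower A S M := .of_algebraMap_smul fun _ _ => rfl
  have : IsScalarTower R A S := .of_algebraMap_eq fun r => (π.commutes r).symm
  have : IsScalarTower R A M := .to₁₂₄ R A S M
  have : IsScalarTower R B M := .to₁₂₄ R B A M
  have hA : HasFiniteCIDim A M := hasFiniteCIDim_localizationAtPrime_mvPolynomial ι p hfd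
  exact hasFiniteCIDim_of_surjective hπ hker hA

/-- Ascent of complete intersection flat dimension. -/
theorem ascent_CIfd_of_flat_eft_ci [Module.Flat R S] [Algebra.EssFiniteType R S]
    (hci : IsCIAt R S (algebraMap R S) (maximalIdeal S))
    
    (hfd : HasFiniteCIDim R M) :
    HasFiniteCIDim S M :=
  ascent_CIfd_of_flat_eft_ci_general hci hfd
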